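/- arXiv:1603.02319 — 2 statements merged into one kernel-verified Lean document; each statement's English description precedes it below -/
import Mathlib

section
/- Let g:(ℝ,0)→(ℝ^3,0) be the curve-germ g(t) = (t^4,t^5,t^6). For every germ at 0 of a smooth differential 2-form ω on ℝ^3 with dω = 0 on a neighbourhood of 0, there exist unique real numbers c_1,…,c_8 such that the 2-form ω − (c_1·dx_1∧dx_2 + c_2·dx_1∧dx_3 + c_3·dx_2∧dx_3 + c_4·x_1dx_1∧dx_2 + c_5·x_1dx_1∧dx_3 + c_6·(x_2dx_1∧dx_3 + x_1dx_2∧dx_3) + c_7·x_3dx_2∧dx_3 + c_8·x_2^2dx_1∧dx_2) has zero algebraic restriction to g. (Equivalently: the algebraic restrictions to g of these eight closed 2-forms form a basis of the vector space of algebraic restrictions of closed 2-forms to g.) -/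
open Filter Topology

noncomputable section

/-- A (set-theoretic) differential 1-form on `ℝ^m`: a map assigning to each point a
function on tangent vectors. -/
def Form1 (m : ℕ) := (Fin m → ℝ) → (Fin m → ℝ) → ℝ

/-- A (set-theoretic) differential 2-form on `ℝ^m`. -/
def Form2 (m : ℕ) := (Fin m → ℝ) → (Fin m → ℝ) → (Fin m → ℝ) → ℝ

/-- A germ at `0` of a smooth differential 1-form: pointwise linear in the tangent
vector, and with coefficients smooth on a neighbourhood of `0`. -/
def IsForm1 (m : ℕ) (β : Form1 m) : Prop :=
  (∀ x u₁ u₂ (c : ℝ), β x (u₁ + c • u₂) = β x u₁ + c * β x u₂) ∧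
  (∀ u, ∃ U ∈ 𝓝 (0 : Fin m → ℝ), ContDiffOn ℝ (⊤ : ℕ∞) (fun x => β x u) U)

/-- A germ at `0` of a smooth differential 2-form: pointwise bilinear and alternating
in the tangent vectors, with coefficients smooth on a neighbourhood of `0`. -/
def IsForm2 (m : ℕ) (ω : Form2 m) : Prop :=
  (∀ x u₁ u₂ v (c : ℝ), ω x (u₁ + c • u₂) v = ω x u₁ v + c * ω x u₂ v) ∧
  (∀ x u v, ω x u v = - ω x v u) ∧
  (∀ u v, ∃ U ∈ 𝓝 (0 : Fin m → ℝ), ContDiffOn ℝ (⊤ : ℕ∞) (fun x => ω x u v) U)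

/-- The exterior derivative of a 1-form, evaluated on a pair of (constant) vectors. -/
def extD1 (m : ℕ) (β : Form1 m) : Form2 m :=
  fun x u v => fderiv ℝ (fun y => β y v) x u - fderiv ℝ (fun y => β y u) x v

/-- The exterior derivative of a 2-form, evaluated on a triple of (constant) vectors. -/
def extD2 (m : ℕ) (ω : Form2 m) (x u v w : Fin m → ℝ) : ℝ :=
  fderiv ℝ (fun y => ω y v w) x u - fderiv ℝ (fun y => ω y u w) x v
    + fderiv ℝ (fun y => ω y u v) x w

/-- A 2-form is closed near `0` if its exterior derivative vanishes near `0`. -/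
def Closed2 (m : ℕ) (ω : Form2 m) : Prop :=
  ∀ᶠ x in 𝓝 (0 : Fin m → ℝ), ∀ u v w, extD2 m ω x u v w = 0

/-- A 1-form vanishes on the image of a curve-germ. -/
def VanishesOn1 (m : ℕ) (β : Form1 m) (f : ℝ → (Fin m → ℝ)) : Prop :=
  ∀ᶠ t in 𝓝 (0 : ℝ), ∀ u, β (f t) u = 0

/-- A 2-form vanishes on the image of a curve-germ. -/
def VanishesOn2 (m : ℕ) (ω : Form2 m) (f : ℝ → (Fin m → ℝ)) : Prop :=
  ∀ᶠ t in 𝓝 (0 : ℝ), ∀ u v, ω (f t) u v = 0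

/-- A 2-form `ω` has zero algebraic restriction to the curve-germ `f` if `ω = α + dβ`
near `0` for a smooth 2-form `α` and a smooth 1-form `β` both vanishing on `im f`. -/
def ZeroAR2 (m : ℕ) (ω : Form2 m) (f : ℝ → (Fin m → ℝ)) : Prop :=
  ∃ (α : Form2 m) (β : Form1 m), IsForm2 m α ∧ IsForm1 m β ∧
    VanishesOn2 m α f ∧ VanishesOn1 m β f ∧
    ∀ᶠ x in 𝓝 (0 : Fin m → ℝ), ∀ u v, ω x u v = α x u v + extD1 m β x u v

/-- Two 2-forms have the same algebraic restriction to `f` if their difference has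
zero algebraic restriction to `f`. -/
def SameAR2 (m : ℕ) (ω₁ ω₂ : Form2 m) (f : ℝ → (Fin m → ℝ)) : Prop :=
  ZeroAR2 m (fun x u v => ω₁ x u v - ω₂ x u v) f

/-- The pullback of a 2-form by a (germ of) smooth map. -/
def pull2 (m : ℕ) (Φ : (Fin m → ℝ) → (Fin m → ℝ)) (ω : Form2 m) : Form2 m :=
  fun x u v => ω (Φ x) (fderiv ℝ Φ x u) (fderiv ℝ Φ x v)

/-- A germ of diffeomorphism of `(ℝ,0)`. -/
def IsDiffeoGerm1 (φ : ℝ → ℝ) : Prop :=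
  φ 0 = 0 ∧ (∃ U ∈ 𝓝 (0 : ℝ), ContDiffOn ℝ (⊤ : ℕ∞) φ U) ∧ deriv φ 0 ≠ 0

/-- A germ of diffeomorphism of `(ℝ^m,0)`. -/
def IsDiffeoGerm (m : ℕ) (Φ : (Fin m → ℝ) → (Fin m → ℝ)) : Prop :=
  Φ 0 = 0 ∧ (∃ U ∈ 𝓝 (0 : Fin m → ℝ), ContDiffOn ℝ (⊤ : ℕ∞) Φ U) ∧
    ∃ D : (Fin m → ℝ) ≃L[ℝ] (Fin m → ℝ),
      HasFDerivAt Φ (D : (Fin m → ℝ) →L[ℝ] (Fin m → ℝ)) 0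

/-- The constant 2-form `dxᵢ ∧ dxⱼ` on `ℝ^m` (indices `0`-based). -/
def wedge (m : ℕ) (i j : Fin m) : Form2 m := fun _ u v => u i * v j - u j * v i

/-- The 2-form `x_l · dxᵢ ∧ dxⱼ` on `ℝ^m` (indices `0`-based). -/
def mwedge (m : ℕ) (l i j : Fin m) : Form2 m :=
  fun x u v => x l * (u i * v j - u j * v i)

/-- The eight closed 2-forms of Proposition 5.2: `dx₁∧dx₂, dx₁∧dx₃, dx₂∧dx₃,
x₁dx₁∧dx₂, x₁dx₁∧dx₃, x₂dx₁∧dx₃ + x₁dx₂∧dx₃, x₃dx₂∧dx₃, x₂²dx₁∧dx₂`. -/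
def basis456 : Fin 8 → Form2 3 :=
  ![wedge 3 0 1, wedge 3 0 2, wedge 3 1 2,
    mwedge 3 0 0 1, mwedge 3 0 0 2,
    fun x u v => x 1 * (u 0 * v 2 - u 2 * v 0) + x 0 * (u 1 * v 2 - u 2 * v 1),
    mwedge 3 2 1 2,
    fun x u v => (x 1)^2 * (u 0 * v 1 - u 1 * v 0)]

/-!
Near `0`, a germ of a `2`-form is `∑ i j, a i j dxᵢ ∧ dxⱼ` with globally smooth coefficients, and
its algebraic restriction to a curve vanishes iff the matrix `a` lies in a certain submodule over
the ring of smooth functions.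

In the quotient by this submodule, `q` and `dq ∧ dxⱼ` vanish for `q = y² - xz` and `q = z² - x³`.
These relations reduce all terms of order at least two to combinations of `z dy ∧ dz` and
`y² dx ∧ dy`, both killed by the maximal ideal; the linear terms are left with one relation too
few, which closedness at `0` supplies.

For uniqueness, let `b` vanish on the curve `t ↦ (t ^ n₁, …, t ^ nₘ)`. The Euler field
`∑ lᵢ xᵢ ∂/∂xᵢ` multiplies the monomial `x ^ k` by `∑ lᵢ kᵢ`, so if this number is the same for
all `k` with `∑ kᵢ nᵢ = w`, then the coefficient of `t ^ w` in `∑ lᵢ t ^ nᵢ (∂b/∂xᵢ)` vanishes.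
For the exponents `4, 5, 6` these relations show that eight linear functionals, dual to the given
forms, vanish on forms with zero algebraic restriction.
-/

section

open scoped Manifold ContDiff

lemma contDiff_setIntegral_of_isBounded {P G F : Type*} [NormedAddCommGroup P] [NormedSpace ℝ P]
    [NormedAddCommGroup G] [NormedSpace ℝ G] [FiniteDimensional ℝ G] [MeasurableSpace G]
    [BorelSpace G] [NormedAddCommGroup F] [NormedSpace ℝ F] {μ : MeasureTheory.Measure G}
    [MeasureTheory.IsLocallyFiniteMeasure μ] {s : Set G}
    (hs : Bornology.IsBounded s) (hs' : MeasurableSet s) {f : P → G → F} (hf : ContDiff ℝ ∞ ↿f) :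
    ContDiff ℝ ∞ (fun x => ∫ t in s, f x t ∂μ) := by
  -- A bump function equal to `1` near `s` makes the integral a convolution, evaluated at `0`, of
  -- the indicator of `s` with a compactly supported kernel depending smoothly on `x`.
  obtain ⟨r, hr, hsr⟩ := hs.subset_closedBall_lt 0 0
  let χ : ContDiffBump (0 : G) := ⟨r, r + 1, hr, lt_add_one r⟩
  have hχ_supp : ∀ t ∉ Metric.closedBall (0 : G) (r + 1), χ t = 0 := fun t ht =>
    χ.zero_of_le_dist (not_le.1 ht).le
  have hχ_one : ∀ t ∈ s, χ (-t) = 1 := fun t ht =>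
    χ.one_of_mem_closedBall (by simpa using hsr ht)
  have hint : MeasureTheory.LocallyIntegrable (s.indicator fun _ => (1 : ℝ)) μ :=
    ((MeasureTheory.integrable_indicator_iff hs').2
      (MeasureTheory.integrableOn_const hs.measure_lt_top.ne)).locallyIntegrable
  have hsmooth : ContDiff ℝ ∞ (↿fun (x : P) (t : G) => χ t • f x (-t)) :=
    (χ.contDiff.comp contDiff_snd).smul (hf.comp (contDiff_fst.prodMk contDiff_snd.neg))
  have key := MeasureTheory.contDiffOn_convolution_right_with_param_comp (μ := μ) (n := ⊤)
    (ContinuousLinearMap.lsmul ℝ ℝ) (s := Set.univ) (v := fun _ : P => (0 : G)) contDiffOn_const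
    isOpen_univ (isCompact_closedBall 0 (r + 1)) (fun x t _ ht => by simp [hχ_supp t ht]) hint
    hsmooth.contDiffOn
  rw [contDiffOn_univ] at key
  convert key using 2 with x
  rw [MeasureTheory.convolution_def, ← MeasureTheory.integral_indicator hs']
  congr 1 with t
  by_cases ht : t ∈ s
  · simp [ht, hχ_one t ht]
  · simp [ht]

/-- The ring of smooth functions on a normed space. Every smooth germ is the germ of a globally
smooth function, so coefficients of germs of forms are taken in this ring. -/
abbrev SmoothFun (E : Type*) [NormedAddCommGroup E] [NormedSpace ℝ E] : Type _ :=
  C^∞⟮𝓘(ℝ, E), E; ℝ⟯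

end

namespace SmoothFun

open scoped Manifold ContDiff

section

variable {E F : Type*} [NormedAddCommGroup E] [NormedSpace ℝ E] [NormedAddCommGroup F]
  [NormedSpace ℝ F]

protected lemma contDiff (p : SmoothFun E) : ContDiff ℝ ∞ p := p.contMDiff.contDiff

protected lemma differentiable (p : SmoothFun E) : Differentiable ℝ p :=
  p.contDiff.differentiable (by simp)

@[simp]
protected lemma algebraMap_apply (c : ℝ) (x : E) : algebraMap ℝ (SmoothFun E) c x = c := rfl

@[simp]
protected lemma sum_apply {ι : Type*} (s : Finset ι) (p : ι → SmoothFun E) (x : E) :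
    (∑ i ∈ s, p i) x = ∑ i ∈ s, p i x :=
  map_sum (ContMDiffMap.evalRingHom x) p s

/-- The directional derivative along a constant vector field, as a derivation. -/
def dirDeriv (v : E) : Derivation ℝ (SmoothFun E) (SmoothFun E) :=
  Derivation.mk'
    { toFun p := ⟨fun x => fderiv ℝ p x v,
        ((p.contDiff.fderiv_right (by simp)).clm_apply contDiff_const).contMDiff⟩
      map_add' p q := by
        ext x
        exact DFunLike.congr_fun (fderiv_add (p.differentiable x) (q.differentiable x)) v
      map_smul' c p := by
        ext x
        exact DFunLike.congr_fun (fderiv_const_smul (p.differentiable x) c) v }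
    fun p q => by
      ext x
      exact DFunLike.congr_fun (fderiv_mul (p.differentiable x) (q.differentiable x)) v

@[simp]
lemma dirDeriv_apply (v x : E) (p : SmoothFun E) : dirDeriv v p x = fderiv ℝ p x v := rfl

lemma exists_eventuallyEq_of_contDiffOn [FiniteDimensional ℝ E] {f : E → ℝ} {a : E} {U : Set E}
    (hU : U ∈ 𝓝 a) (hf : ContDiffOn ℝ ∞ f U) : ∃ p : SmoothFun E, f =ᶠ[𝓝 a] p := by
  obtain ⟨r, hr, hrU⟩ := Metric.mem_nhds_iff.1 hU
  let χ : ContDiffBump a := ⟨r / 4, r / 2, by positivity, by linarith⟩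
  have hχ : tsupport χ ⊆ Metric.ball a r :=
    χ.tsupport_eq.trans_subset (Metric.closedBall_subset_ball (half_lt_self hr))
  have hsmooth : ContMDiff 𝓘(ℝ, E) 𝓘(ℝ, ℝ) ∞ fun x => χ x * f x :=
    contMDiff_of_tsupport fun x hx => by
      have hxr := hχ (tsupport_mul_subset_left hx)
      exact (χ.contDiff.contDiffAt.mul (hf.contDiffAt
        (mem_of_superset (Metric.isOpen_ball.mem_nhds hxr) hrU))).contMDiffAt
  refine ⟨⟨_, hsmooth⟩, ?_⟩
  filter_upwards [χ.eventuallyEq_one] with x hx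
  simp [hx]

/-- Composition with a smooth map, as a homomorphism of algebras of smooth functions. -/
def pullback (γ : C^∞⟮𝓘(ℝ, E), E; 𝓘(ℝ, F), F⟯) : SmoothFun F →ₐ[ℝ] SmoothFun E where
  toFun p := p.comp γ
  map_one' := rfl
  map_mul' _ _ := rfl
  map_zero' := rfl
  map_add' _ _ := rfl
  commutes' _ := rfl

/-- The ideal of smooth functions vanishing on the image of a curve-germ. -/
def vanishingIdeal (γ : ℝ → E) : Ideal (SmoothFun E) where
  carrier := {p | ∀ᶠ t in 𝓝 0, p (γ t) = 0}
  add_mem' hp hq := by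
    filter_upwards [hp, hq] with t hpt hqt
    simp [hpt, hqt]
  zero_mem' := Eventually.of_forall fun _ => rfl
  smul_mem' r p hp := by
    filter_upwards [hp] with t hpt
    simp [hpt]

end

section

variable {m : ℕ}

/-- The `i`-th coordinate function on `ℝ^m`. -/
def coord (i : Fin m) : SmoothFun (Fin m → ℝ) :=
  ⟨fun x => x i, (contDiff_apply ℝ ℝ i).contMDiff⟩

@[simp]
lemma coord_apply (i : Fin m) (x : Fin m → ℝ) : coord i x = x i := rfl

/-- The partial derivative `∂/∂xᵢ`. -/
def pderiv (i : Fin m) : Derivation ℝ (SmoothFun (Fin m → ℝ)) (SmoothFun (Fin m → ℝ)) :=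
  dirDeriv (Pi.single i 1)

lemma fderiv_eq_sum_pderiv (p : SmoothFun (Fin m → ℝ)) (x v : Fin m → ℝ) :
    fderiv ℝ p x v = ∑ i, v i * pderiv i p x := by
  conv_lhs => rw [← Finset.univ_sum_single v]
  simp only [map_sum, pderiv, dirDeriv_apply]
  refine Finset.sum_congr rfl fun i _ => ?_
  rw [← smul_eq_mul, ← map_smul, ← Pi.single_smul, smul_eq_mul, mul_one]

@[simp]
lemma pderiv_coord (i j : Fin m) :
    pderiv i (coord j) = (Pi.single i 1 : Fin m → SmoothFun (Fin m → ℝ)) j := by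
  ext x
  have h : fderiv ℝ (coord j) x = ContinuousLinearMap.proj j :=
    (ContinuousLinearMap.proj (R := ℝ) (φ := fun _ : Fin m => ℝ) j).fderiv
  rw [pderiv, dirDeriv_apply, h]
  by_cases hij : j = i <;> simp [hij]

theorem exists_eq_algebraMap_add_sum_coord_mul (p : SmoothFun (Fin m → ℝ)) :
    ∃ q : Fin m → SmoothFun (Fin m → ℝ),
      p = algebraMap ℝ _ (p 0) + ∑ i, coord i * q i := by
  let q (i : Fin m) : SmoothFun (Fin m → ℝ) :=
    ⟨fun x => ∫ t in Set.Ioc (0 : ℝ) 1, pderiv i p (t • x),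
      (contDiff_setIntegral_of_isBounded (Metric.isBounded_Ioc 0 1) measurableSet_Ioc
        ((pderiv i p).contDiff.comp (contDiff_snd.smul contDiff_fst))).contMDiff⟩
  refine ⟨q, ContMDiffMap.ext fun x => ?_⟩
  have hderiv (t : ℝ) : HasDerivAt (fun t : ℝ => p (t • x)) (∑ i, x i * pderiv i p (t • x)) t := by
    rw [← fderiv_eq_sum_pderiv]
    exact (p.differentiable (t • x)).hasFDerivAt.comp_hasDerivAt t
      (by simpa using (hasDerivAt_id t).smul_const x)
  have hint (i : Fin m) :
      IntervalIntegrable (fun t : ℝ => x i * pderiv i p (t • x)) MeasureTheory.volume 0 1 :=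
    have := (pderiv i p).contDiff.continuous
    Continuous.intervalIntegrable (by fun_prop) 0 1
  have hFTC := intervalIntegral.integral_eq_sub_of_hasDerivAt (fun t _ => hderiv t)
    (by simpa only [Finset.sum_fn] using IntervalIntegrable.sum Finset.univ fun i _ => hint i)
  rw [intervalIntegral.integral_finsetSum fun i _ => hint i] at hFTC
  simp only [MeasureTheory.integral_const_mul, one_smul, zero_smul,
    intervalIntegral.integral_of_le zero_le_one] at hFTC
  simp only [ContMDiffMap.coe_add, ContMDiffMap.coe_mul, Pi.add_apply, Pi.mul_apply,
    SmoothFun.algebraMap_apply, SmoothFun.sum_apply, coord_apply]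
  exact (add_sub_cancel (p 0) (p x)).symm.trans (congr_arg (p 0 + ·) hFTC.symm)

/-- The ideal of smooth functions on `ℝ^m` generated by the coordinates. -/
def coordIdeal (m : ℕ) : Ideal (SmoothFun (Fin m → ℝ)) := Ideal.span (Set.range coord)

lemma coord_mem_coordIdeal (i : Fin m) : coord i ∈ coordIdeal m :=
  Ideal.subset_span ⟨i, rfl⟩

lemma sum_coord_mul_mem_coordIdeal (q : Fin m → SmoothFun (Fin m → ℝ)) :
    ∑ i, coord i * q i ∈ coordIdeal m :=
  Ideal.sum_mem _ fun i _ => Ideal.mul_mem_right _ _ (coord_mem_coordIdeal i)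

lemma sub_algebraMap_mem_coordIdeal (p : SmoothFun (Fin m → ℝ)) :
    p - algebraMap ℝ _ (p 0) ∈ coordIdeal m := by
  obtain ⟨q, hq⟩ := exists_eq_algebraMap_add_sum_coord_mul p
  rw [sub_eq_of_eq_add' hq]
  exact sum_coord_mul_mem_coordIdeal q

lemma taylor_sub_mem_coordIdeal_sq (p : SmoothFun (Fin m → ℝ)) :
    p - (algebraMap ℝ _ (p 0) + ∑ i, algebraMap ℝ _ (pderiv i p 0) * coord i) ∈
      coordIdeal m ^ 2 := by
  obtain ⟨q, hq⟩ := exists_eq_algebraMap_add_sum_coord_mul p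
  have hq0 (i : Fin m) : pderiv i p 0 = q i 0 := by
    rw [hq, map_add, Derivation.map_algebraMap, zero_add, map_sum]
    simp [Derivation.leibniz, Pi.single_apply, Finset.sum_add_distrib]
  have hp : p - (algebraMap ℝ _ (p 0) + ∑ i, algebraMap ℝ _ (pderiv i p 0) * coord i) =
      ∑ i, coord i * (q i - algebraMap ℝ _ (q i 0)) := by
    conv_lhs => rw [sub_add_eq_sub_sub, sub_eq_of_eq_add' hq]
    simp only [hq0, ← Finset.sum_sub_distrib]
    exact Finset.sum_congr rfl fun i _ => by ring
  rw [hp, sq]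
  exact Ideal.sum_mem _ fun i _ =>
    Ideal.mul_mem_mul (coord_mem_coordIdeal i) (sub_algebraMap_mem_coordIdeal _)

lemma smul_eq_apply_zero_smul {M : Type*} [AddCommGroup M] [Module (SmoothFun (Fin m → ℝ)) M]
    [Module ℝ M] [IsScalarTower ℝ (SmoothFun (Fin m → ℝ)) M] {v : M}
    (hv : ∀ i : Fin m, coord i • v = 0) (p : SmoothFun (Fin m → ℝ)) : p • v = p 0 • v := by
  have hI : coordIdeal m ≤ Ideal.torsionOf _ _ v :=
    Ideal.span_le.2 (by rintro _ ⟨i, rfl⟩; exact hv i)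
  have h := (Ideal.mem_torsionOf_iff _ _).1 (hI (sub_algebraMap_mem_coordIdeal p))
  rwa [sub_smul, sub_eq_zero, algebraMap_smul] at h

lemma smul_mem_of_mem_coordIdeal_sq {M : Type*} [AddCommGroup M]
    [Module (SmoothFun (Fin m → ℝ)) M] {N : Submodule (SmoothFun (Fin m → ℝ)) M} {v : M}
    (hv : ∀ i j : Fin m, i ≤ j → coord i • coord j • v ∈ N) {p : SmoothFun (Fin m → ℝ)}
    (hp : p ∈ coordIdeal m ^ 2) : p • v ∈ N := by
  have hI : coordIdeal m ^ 2 ≤ N.comap (LinearMap.toSpanSingleton _ M v) := by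
    rw [sq, coordIdeal, Ideal.span_mul_span', Ideal.span_le]
    rintro _ ⟨_, ⟨i, rfl⟩, _, ⟨j, rfl⟩, rfl⟩
    rcases le_total i j with h | h
    · simpa [mul_smul] using hv i j h
    · simpa [mul_smul, smul_comm (coord i)] using hv j i h
  exact hI hp

theorem exists_mem_adjoin_sub_mem_coordIdeal_pow (k : ℕ) (p : SmoothFun (Fin m → ℝ)) :
    ∃ P ∈ Algebra.adjoin ℝ (Set.range (coord (m := m))), p - P ∈ coordIdeal m ^ k := by
  induction k generalizing p with
  | zero => exact ⟨0, zero_mem _, by simp⟩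
  | succ k ih =>
    obtain ⟨q, hq⟩ := exists_eq_algebraMap_add_sum_coord_mul p
    choose P hP hqP using fun i => ih (q i)
    refine ⟨algebraMap ℝ _ (p 0) + ∑ i, coord i * P i, add_mem (Subalgebra.algebraMap_mem _ _)
      (sum_mem fun i _ => mul_mem (Algebra.subset_adjoin ⟨i, rfl⟩) (hP i)), ?_⟩
    rw [sub_eq_of_eq_add' (b := algebraMap ℝ _ (p 0) + ∑ i, coord i * P i)
      (c := ∑ i, coord i * (q i - P i)), pow_succ']
    · exact Ideal.sum_mem _ fun i _ => Ideal.mul_mem_mul (coord_mem_coordIdeal i) (hqP i)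
    · conv_lhs => rw [hq]
      simp only [mul_sub, Finset.sum_sub_distrib]
      ring

/-- The formal Taylor series at `0`, as a homomorphism of algebras. -/
def taylorSeries : SmoothFun ℝ →ₐ[ℝ] PowerSeries ℝ where
  toFun p := PowerSeries.mk fun n => iteratedDeriv n p 0 / n.factorial
  map_one' := by
    ext n
    have : ⇑(1 : SmoothFun ℝ) = fun _ => (1 : ℝ) := rfl
    rcases n with _ | n <;> simp [PowerSeries.coeff_one, this, iteratedDeriv_const]
  map_mul' p q := by
    ext n
    rw [PowerSeries.coeff_mul]
    simp only [PowerSeries.coeff_mk, ContMDiffMap.coe_mul]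
    rw [iteratedDeriv_mul (p.contDiff.of_le (mod_cast le_top)).contDiffAt
      (q.contDiff.of_le (mod_cast le_top)).contDiffAt, Finset.sum_div,
      Finset.Nat.sum_antidiagonal_eq_sum_range_succ_mk]
    refine Finset.sum_congr rfl fun i hi => ?_
    rw [Nat.cast_choose _ (Nat.le_of_lt_succ (Finset.mem_range.1 hi))]
    field_simp [Nat.factorial_ne_zero]
  map_zero' := by
    ext n
    have : ⇑(0 : SmoothFun ℝ) = fun _ => (0 : ℝ) := rfl
    simp [this]
  map_add' p q := by
    ext n
    simp only [PowerSeries.coeff_mk, ContMDiffMap.coe_add, map_add]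
    rw [iteratedDeriv_add (p.contDiff.of_le (mod_cast le_top)).contDiffAt
      (q.contDiff.of_le (mod_cast le_top)).contDiffAt, add_div]
  commutes' c := by
    ext n
    have : ⇑(algebraMap ℝ (SmoothFun ℝ) c) = fun _ => c := rfl
    rcases n with _ | n <;> simp [PowerSeries.coeff_C, this, iteratedDeriv_const]

lemma coeff_taylorSeries (p : SmoothFun ℝ) (n : ℕ) :
    PowerSeries.coeff n (taylorSeries p) = iteratedDeriv n p 0 / n.factorial :=
  PowerSeries.coeff_mk n fun n => iteratedDeriv n p 0 / n.factorial

lemma taylorSeries_eq_zero {p : SmoothFun ℝ} (hp : p =ᶠ[𝓝 0] 0) : taylorSeries p = 0 := by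
  ext n
  rw [coeff_taylorSeries, hp.iteratedDeriv_eq]
  simp

lemma taylorSeries_id : taylorSeries ContMDiffMap.id = PowerSeries.X := by
  ext n
  rw [coeff_taylorSeries, PowerSeries.coeff_X]
  have : (ContMDiffMap.id : SmoothFun ℝ) = (fun t : ℝ => t ^ 1) :=
    funext fun t => (pow_one t).symm
  rw [this, iteratedDeriv_fun_pow_zero]
  split_ifs with h <;> simp [h]

/-! ### Monomial curves and Euler derivations -/

/-- The Euler vector field `∑ i, lᵢ xᵢ ∂/∂xᵢ` with integer weights `l`, whose eigenvectors are the
monomials. -/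
def eulerDeriv (l : Fin m → ℤ) : Derivation ℝ (SmoothFun (Fin m → ℝ)) (SmoothFun (Fin m → ℝ)) :=
  ∑ i, (l i * coord i) • pderiv i

lemma eulerDeriv_apply (l : Fin m → ℤ) (p : SmoothFun (Fin m → ℝ)) :
    eulerDeriv l p = ∑ i, l i * coord i * pderiv i p := by
  have h := congrFun (map_sum Derivation.coeFnAddMonoidHom
    (fun i => ((l i * coord i : SmoothFun (Fin m → ℝ)) • pderiv i)) Finset.univ) p
  rwa [Finset.sum_apply] at h

lemma eulerDeriv_coord (l : Fin m → ℤ) (i : Fin m) : eulerDeriv l (coord i) = l i * coord i := by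
  simp [eulerDeriv_apply, Pi.single_apply]

lemma eulerDeriv_mem_coordIdeal_pow (l : Fin m → ℤ) {k : ℕ} {p : SmoothFun (Fin m → ℝ)}
    (hp : p ∈ coordIdeal m ^ k) : eulerDeriv l p ∈ coordIdeal m ^ k := by
  induction k generalizing p with
  | zero => simp
  | succ k ih =>
    rw [pow_succ'] at hp ⊢
    refine Submodule.mul_induction_on hp (fun a ha b hb => ?_) fun a b ha hb => ?_
    · have hEa : eulerDeriv l a ∈ coordIdeal m := by
        rw [eulerDeriv_apply]
        exact Ideal.sum_mem _ fun i _ => Ideal.mul_mem_right _ _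
          (Ideal.mul_mem_left _ _ (coord_mem_coordIdeal i))
      rw [Derivation.leibniz, smul_eq_mul, smul_eq_mul, mul_comm b]
      exact add_mem (Ideal.mul_mem_mul ha (ih hb)) (Ideal.mul_mem_mul hEa hb)
    · rw [map_add]
      exact add_mem ha hb

/-- The curve `t ↦ (t ^ n₁, …, t ^ nₘ)`. -/
def monomialCurve (n : Fin m → ℕ) : C^∞⟮𝓘(ℝ, ℝ), ℝ; 𝓘(ℝ, Fin m → ℝ), Fin m → ℝ⟯ :=
  ⟨fun t i => t ^ n i, (contDiff_pi.2 fun i => contDiff_id.pow (n i)).contMDiff⟩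

/-- The Taylor series at `t = 0` of a function along `monomialCurve n`. -/
def curveSeries (n : Fin m → ℕ) : SmoothFun (Fin m → ℝ) →ₐ[ℝ] PowerSeries ℝ :=
  taylorSeries.comp (pullback (monomialCurve n))

lemma curveSeries_coord (n : Fin m → ℕ) (i : Fin m) :
    curveSeries n (coord i) = PowerSeries.X ^ n i := by
  rw [← taylorSeries_id, ← map_pow]
  refine congr_arg taylorSeries ?_
  ext t
  rfl

lemma curveSeries_eq_zero {n : Fin m → ℕ} {p : SmoothFun (Fin m → ℝ)}
    (hp : p ∈ vanishingIdeal (monomialCurve n)) : curveSeries n p = 0 :=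
  taylorSeries_eq_zero hp

lemma X_pow_dvd_curveSeries {n : Fin m → ℕ} (hn : ∀ i, n i ≠ 0) {k : ℕ}
    {p : SmoothFun (Fin m → ℝ)} (hp : p ∈ coordIdeal m ^ k) :
    PowerSeries.X ^ k ∣ curveSeries n p := by
  have hX : coordIdeal m ≤ (Ideal.span {PowerSeries.X}).comap (curveSeries n) := by
    refine Ideal.span_le.2 ?_
    rintro _ ⟨i, rfl⟩
    simpa [Ideal.mem_span_singleton, curveSeries_coord] using
      dvd_pow_self (PowerSeries.X : PowerSeries ℝ) (hn i)
  have h := Ideal.le_comap_pow (curveSeries n) k (Ideal.pow_right_mono hX k hp)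
  rwa [Ideal.mem_comap, Ideal.span_singleton_pow, Ideal.mem_span_singleton] at h

theorem exists_exponent_of_mem_closure (n : Fin m → ℕ) {p : SmoothFun (Fin m → ℝ)}
    (hp : p ∈ Submonoid.closure (Set.range (coord (m := m)))) :
    ∃ k : Fin m → ℕ, curveSeries n p = PowerSeries.X ^ (∑ i, k i * n i) ∧
      ∀ l : Fin m → ℤ, eulerDeriv l p = (∑ i, l i * k i) • p := by
  induction hp using Submonoid.closure_induction with
  | mem p hp =>
    obtain ⟨i, rfl⟩ := hp
    exact ⟨Pi.single i 1, by simp [curveSeries_coord, Pi.single_apply],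
      fun l => by simp [eulerDeriv_coord, Pi.single_apply]⟩
  | one => exact ⟨0, by simp, by simp⟩
  | mul p q _ _ hp hq =>
    obtain ⟨k, hk, hkl⟩ := hp
    obtain ⟨k', hk', hkl'⟩ := hq
    refine ⟨k + k', ?_, fun l => ?_⟩
    · simp [hk, hk', ← pow_add, add_mul, Finset.sum_add_distrib]
    · rw [Derivation.leibniz, hkl, hkl', smul_comm p, smul_comm q, smul_eq_mul, smul_eq_mul,
        mul_comm q, add_comm, ← add_smul, ← Finset.sum_add_distrib]
      simp only [Pi.add_apply, Nat.cast_add, mul_add]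

theorem coeff_curveSeries_eulerDeriv {n : Fin m → ℕ} (hn : ∀ i, n i ≠ 0) {w : ℕ}
    {l : Fin m → ℤ} {d : ℤ} (hl : ∀ k : Fin m → ℕ, ∑ i, k i * n i = w → ∑ i, l i * k i = d)
    (p : SmoothFun (Fin m → ℝ)) :
    PowerSeries.coeff w (curveSeries n (eulerDeriv l p)) =
      d • PowerSeries.coeff w (curveSeries n p) := by
  let φ : SmoothFun (Fin m → ℝ) →ₗ[ℝ] ℝ :=
    (PowerSeries.coeff w ∘ₗ (curveSeries n).toLinearMap) ∘ₗ
      ((eulerDeriv l).toLinearMap - d • LinearMap.id)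
  have hφ (q : SmoothFun (Fin m → ℝ)) : φ q =
      PowerSeries.coeff w (curveSeries n (eulerDeriv l q)) -
        d • PowerSeries.coeff w (curveSeries n q) := by
    simp [φ, -zsmul_eq_mul]
  rw [← sub_eq_zero, ← hφ]
  obtain ⟨P, hP, hpP⟩ := exists_mem_adjoin_sub_mem_coordIdeal_pow (w + 1) p
  have hφP : φ P = 0 := by
    rw [← Subalgebra.mem_toSubmodule, Algebra.adjoin_eq_span] at hP
    refine LinearMap.mem_ker.1 (Submodule.span_le.2 (fun q hq => ?_) hP)
    obtain ⟨k, hk, hkl⟩ := exists_exponent_of_mem_closure n hq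
    rw [SetLike.mem_coe, LinearMap.mem_ker, hφ, hkl, map_zsmul, map_zsmul]
    by_cases hw : ∑ i, k i * n i = w
    · rw [hl k hw, sub_self]
    · rw [hk, PowerSeries.coeff_X_pow, if_neg (Ne.symm hw), smul_zero, smul_zero, sub_self]
  have hcoeff {q : SmoothFun (Fin m → ℝ)} (hq : q ∈ coordIdeal m ^ (w + 1)) :
      PowerSeries.coeff w (curveSeries n q) = 0 :=
    PowerSeries.X_pow_dvd_iff.1 (X_pow_dvd_curveSeries hn hq) w w.lt_succ_self
  have hφ_sub : φ (p - P) = 0 := by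
    rw [hφ, hcoeff hpP, hcoeff (eulerDeriv_mem_coordIdeal_pow l hpP), smul_zero, sub_zero]
  rw [← sub_add_cancel p P, map_add, hφ_sub, hφP, add_zero]

lemma coeff_sum_X_pow_mul_curveSeries_pderiv_eq_zero {n : Fin m → ℕ} (hn : ∀ i, n i ≠ 0) {w : ℕ}
    {l : Fin m → ℤ} {d : ℤ} (hl : ∀ k : Fin m → ℕ, ∑ i, k i * n i = w → ∑ i, l i * k i = d)
    {p : SmoothFun (Fin m → ℝ)} (hp : p ∈ vanishingIdeal (monomialCurve n)) :
    PowerSeries.coeff w (∑ i, l i • (PowerSeries.X ^ n i * curveSeries n (pderiv i p))) = 0 := by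
  have h := coeff_curveSeries_eulerDeriv hn hl p
  rw [curveSeries_eq_zero hp, map_zero, smul_zero, eulerDeriv_apply] at h
  simpa only [map_sum, map_mul, map_intCast, curveSeries_coord, mul_assoc, zsmul_eq_mul] using h

end

end SmoothFun

/-! ### Forms with smooth coefficients -/

open SmoothFun

section

variable {m : ℕ}

/-- Coefficient matrices `a` of smooth `2`-forms `∑ i j, a i j dxᵢ ∧ dxⱼ`. No antisymmetry is
imposed: only `a i j - a j i` matters. -/
abbrev FormCoeffs (m : ℕ) : Type := Matrix (Fin m) (Fin m) (SmoothFun (Fin m → ℝ))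

/-- The `1`-form `∑ j, b j dxⱼ`. -/
def toForm1 (b : Fin m → SmoothFun (Fin m → ℝ)) : Form1 m := fun x v => ∑ j, b j x * v j

/-- The `2`-form `∑ i j, a i j dxᵢ ∧ dxⱼ`, valued in the type of functions underlying `Form2 m` for
the sake of its module structure. -/
def toForm2 : FormCoeffs m →ₗ[ℝ] (Fin m → ℝ) → (Fin m → ℝ) → (Fin m → ℝ) → ℝ where
  toFun a x u v := ∑ i, ∑ j, a i j x * (u i * v j - u j * v i)
  map_add' a a' := by
    ext x u v
    simp [add_mul, Finset.sum_add_distrib]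
  map_smul' c a := by
    ext x u v
    simp [mul_assoc, Finset.mul_sum]

lemma toForm2_apply (a : FormCoeffs m) (x u v : Fin m → ℝ) :
    toForm2 a x u v = ∑ i, ∑ j, a i j x * (u i * v j - u j * v i) := rfl

lemma toForm2_eq_sum (a : FormCoeffs m) (x u v : Fin m → ℝ) :
    toForm2 a x u v = ∑ i, ∑ j, (a i j - a j i) x * (u i * v j) := by
  simp only [toForm2_apply, mul_sub, Finset.sum_sub_distrib, ContMDiffMap.coe_sub, Pi.sub_apply,
    sub_mul]
  congr 1
  rw [Finset.sum_comm]

lemma toForm2_single_single (a : FormCoeffs m) (i j : Fin m) (x : Fin m → ℝ) :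
    toForm2 a x (Pi.single i 1) (Pi.single j 1) = (a i j - a j i) x := by
  simp [toForm2_eq_sum, Pi.single_apply]

/-- The coefficients `∂bⱼ/∂xᵢ` of the exterior derivative of `∑ j, b j dxⱼ`. -/
def jacobian (b : Fin m → SmoothFun (Fin m → ℝ)) : FormCoeffs m :=
  Matrix.of fun i j => pderiv i (b j)

@[simp]
lemma jacobian_apply (b : Fin m → SmoothFun (Fin m → ℝ)) (i j : Fin m) :
    jacobian b i j = pderiv i (b j) := rfl

lemma fderiv_toForm1 (b : Fin m → SmoothFun (Fin m → ℝ)) (x u v : Fin m → ℝ) :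
    fderiv ℝ (fun y => toForm1 b y v) x u = ∑ i, ∑ j, jacobian b i j x * (u i * v j) := by
  have hb : (fun y => toForm1 b y v) = ⇑(∑ j, v j • b j) := by
    ext y
    simp [toForm1, mul_comm]
  rw [hb, fderiv_eq_sum_pderiv]
  simp only [map_sum, Derivation.map_smul, SmoothFun.sum_apply, Finset.mul_sum,
    ContMDiffMap.coe_smul, Pi.smul_apply, smul_eq_mul, jacobian_apply]
  exact Finset.sum_congr rfl fun i _ => Finset.sum_congr rfl fun j _ => by ring

lemma extD1_toForm1 (b : Fin m → SmoothFun (Fin m → ℝ)) :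
    extD1 m (toForm1 b) = toForm2 (jacobian b) := by
  funext x u v
  simp only [extD1, fderiv_toForm1, toForm2_apply, ← Finset.sum_sub_distrib, ← mul_sub]
  simp only [mul_sub, Finset.sum_sub_distrib, mul_comm (v _)]

lemma isForm1_toForm1 (b : Fin m → SmoothFun (Fin m → ℝ)) : IsForm1 m (toForm1 b) := by
  refine ⟨fun x u₁ u₂ c => ?_, fun u => ⟨Set.univ, univ_mem, ContDiff.contDiffOn ?_⟩⟩
  · simp only [toForm1, Pi.add_apply, Pi.smul_apply, smul_eq_mul, mul_add, Finset.sum_add_distrib,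
      Finset.mul_sum, mul_left_comm]
  · exact ContDiff.sum fun j _ => (b j).contDiff.mul contDiff_const

lemma isForm2_toForm2 (a : FormCoeffs m) : IsForm2 m (toForm2 a) := by
  refine ⟨fun x u₁ u₂ v c => ?_, fun x u v => ?_,
    fun u v => ⟨Set.univ, univ_mem, ContDiff.contDiffOn ?_⟩⟩
  · simp only [toForm2_apply, Finset.mul_sum, ← Finset.sum_add_distrib, Pi.add_apply,
      Pi.smul_apply, smul_eq_mul]
    exact Finset.sum_congr rfl fun i _ => Finset.sum_congr rfl fun j _ => by ring
  · simp only [toForm2_apply, ← Finset.sum_neg_distrib]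
    exact Finset.sum_congr rfl fun i _ => Finset.sum_congr rfl fun j _ => by ring
  · simp only [toForm2_apply]
    exact ContDiff.sum fun i _ => ContDiff.sum fun j _ => (a i j).contDiff.mul contDiff_const

lemma apply_eq_sum_single {f : (Fin m → ℝ) → ℝ}
    (hf : ∀ u w (c : ℝ), f (u + c • w) = f u + c * f w) (u : Fin m → ℝ) :
    f u = ∑ i, u i * f (Pi.single i 1) := by
  have hf0 : f 0 = 0 := by simpa using hf 0 0 1
  let L : (Fin m → ℝ) →ₗ[ℝ] ℝ :=
    { toFun := f
      map_add' u w := by simpa using hf u w 1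
      map_smul' c w := by simpa [hf0] using hf 0 w c }
  calc f u = L (∑ i, Pi.single i (u i)) := by rw [Finset.univ_sum_single]; rfl
    _ = ∑ i, u i * f (Pi.single i 1) := by
      rw [map_sum]
      refine Finset.sum_congr rfl fun i _ => ?_
      rw [← mul_one (u i), ← smul_eq_mul, Pi.single_smul, map_smul, smul_eq_mul,
        smul_eq_mul, mul_one]
      rfl

lemma IsForm1.exists_eventually_eq_toForm1 {β : Form1 m} (hβ : IsForm1 m β) :
    ∃ b, ∀ᶠ x in 𝓝 0, β x = toForm1 b x := by
  have hb (j : Fin m) : ∃ p : SmoothFun (Fin m → ℝ), (fun x => β x (Pi.single j 1)) =ᶠ[𝓝 0] p :=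
    let ⟨_, hU, h⟩ := hβ.2 (Pi.single j 1)
    exists_eventuallyEq_of_contDiffOn hU h
  choose b hb using hb
  refine ⟨b, (eventually_all.2 hb).mono fun x hx => funext fun v => ?_⟩
  rw [apply_eq_sum_single (hβ.1 x), toForm1]
  exact Finset.sum_congr rfl fun j _ => by rw [← hx j, mul_comm]

lemma IsForm2.exists_eventually_eq_toForm2 {ω : Form2 m} (hω : IsForm2 m ω) :
    ∃ a, ∀ᶠ x in 𝓝 0, ω x = toForm2 a x := by
  have ha (i j : Fin m) : ∃ p : SmoothFun (Fin m → ℝ),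
      (fun x => ω x (Pi.single i 1) (Pi.single j 1)) =ᶠ[𝓝 0] p :=
    let ⟨_, hU, h⟩ := hω.2.2 (Pi.single i 1) (Pi.single j 1)
    exists_eventuallyEq_of_contDiffOn hU h
  choose a ha using ha
  refine ⟨(1 / 2 : ℝ) • Matrix.of a, (eventually_all.2 fun i => eventually_all.2 (ha i)).mono
    fun x hx => ?_⟩
  have hlin (u v w : Fin m → ℝ) (c : ℝ) : ω x u (v + c • w) = ω x u v + c * ω x u w := by
    rw [hω.2.1 x u, hω.1, hω.2.1 x v, hω.2.1 x w]
    ring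
  ext u v
  rw [apply_eq_sum_single (f := fun u => ω x u v) (fun u w c => hω.1 x u w v c), toForm2_eq_sum]
  refine Finset.sum_congr rfl fun i _ => ?_
  rw [apply_eq_sum_single (hlin _), Finset.mul_sum]
  refine Finset.sum_congr rfl fun j _ => ?_
  have hij : a j i x = - a i j x := by
    simpa only [hx] using hω.2.1 x (Pi.single j 1) (Pi.single i 1)
  have hω_ij : ω x (Pi.single i 1) (Pi.single j 1) = a i j x := hx i j
  simp only [hω_ij, Matrix.smul_apply, Matrix.of_apply, ContMDiffMap.coe_sub, ContMDiffMap.coe_smul,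
    Pi.sub_apply, Pi.smul_apply, smul_eq_mul, hij]
  ring

lemma Closed2.sum_pderiv_eq_zero {ω : Form2 m} (hω : Closed2 m ω) {a : FormCoeffs m}
    (ha : ∀ᶠ x in 𝓝 0, ω x = toForm2 a x) (i j k : Fin m) :
    pderiv i (a j k - a k j) 0 - pderiv j (a i k - a k i) 0 + pderiv k (a i j - a j i) 0 = 0 := by
  have hd (p q r : Fin m) : fderiv ℝ (fun y => ω y (Pi.single q 1) (Pi.single r 1)) 0
      (Pi.single p 1) = pderiv p (a q r - a r q) 0 := by
    have h : (fun y => ω y (Pi.single q 1) (Pi.single r 1)) =ᶠ[𝓝 0] ⇑(a q r - a r q) :=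
      ha.mono fun y hy => by simp only [hy, toForm2_single_single]
    rw [h.fderiv_eq, pderiv, dirDeriv_apply]
  rw [← hd, ← hd, ← hd]
  exact hω.self_of_nhds (Pi.single i 1) (Pi.single j 1) (Pi.single k 1)

/-- The coefficient matrices of `2`-forms with zero algebraic restriction to `γ`: up to the jacobian
of a family vanishing along `γ`, the antisymmetrization vanishes along `γ`. -/
def zeroRestriction (γ : ℝ → Fin m → ℝ) : Submodule (SmoothFun (Fin m → ℝ)) (FormCoeffs m) where
  carrier := {a | ∃ b : Fin m → SmoothFun (Fin m → ℝ), (∀ j, b j ∈ vanishingIdeal γ) ∧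
    ∀ i j, (a - jacobian b) i j - (a - jacobian b) j i ∈ vanishingIdeal γ}
  add_mem' := by
    rintro a a' ⟨b, hb, hab⟩ ⟨b', hb', hab'⟩
    refine ⟨b + b', fun j => add_mem (hb j) (hb' j), fun i j => ?_⟩
    convert add_mem (hab i j) (hab' i j) using 1
    simp only [Matrix.sub_apply, Matrix.add_apply, jacobian_apply, Pi.add_apply, map_add]
    ring
  zero_mem' := ⟨0, fun _ => zero_mem _, fun i j => by simp⟩
  smul_mem' := by
    rintro h a ⟨b, hb, hab⟩
    refine ⟨h • b, fun j => Ideal.mul_mem_left _ h (hb j), fun i j => ?_⟩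
    convert sub_mem (Ideal.mul_mem_left _ h (hab i j))
      (sub_mem (Ideal.mul_mem_right (pderiv i h) _ (hb j))
        (Ideal.mul_mem_right (pderiv j h) _ (hb i))) using 1
    simp only [Matrix.sub_apply, Matrix.smul_apply, jacobian_apply, Pi.smul_apply, smul_eq_mul,
      Derivation.leibniz]
    ring

lemma ZeroAR2.congr {ω ω' : Form2 m} {γ : ℝ → Fin m → ℝ} (h : ∀ᶠ x in 𝓝 0, ω x = ω' x)
    (hω : ZeroAR2 m ω γ) : ZeroAR2 m ω' γ := by
  obtain ⟨α, β, hα, hβ, hαγ, hβγ, hd⟩ := hω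
  refine ⟨α, β, hα, hβ, hαγ, hβγ, ?_⟩
  filter_upwards [h, hd] with x hx hdx
  rwa [← hx]

theorem zeroAR2_toForm2_iff {γ : ℝ → Fin m → ℝ} (hγ : Tendsto γ (𝓝 0) (𝓝 0)) (a : FormCoeffs m) :
    ZeroAR2 m (toForm2 a) γ ↔ a ∈ zeroRestriction γ := by
  constructor
  · rintro ⟨α, β, -, hβ, hαγ, hβγ, hd⟩
    obtain ⟨b, hb⟩ := hβ.exists_eventually_eq_toForm1
    refine ⟨b, fun j => ?_, fun i j => ?_⟩
    · filter_upwards [hβγ, hγ.eventually hb] with t hβt hbt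
      simpa [hbt, toForm1, Pi.single_apply] using hβt (Pi.single j 1)
    · filter_upwards [hαγ, hγ.eventually hd, hγ.eventually hb.eventually_nhds] with t hαt hdt hbt
      have hβd : extD1 m β (γ t) = toForm2 (jacobian b) (γ t) := by
        rw [← extD1_toForm1]
        funext u v
        have hfd (w : Fin m → ℝ) : (fun y => β y w) =ᶠ[𝓝 (γ t)] fun y => toForm1 b y w :=
          hbt.mono fun y hy => congrFun hy w
        simp only [extD1, (hfd _).fderiv_eq]
      rw [← toForm2_single_single, map_sub, Pi.sub_apply, Pi.sub_apply, Pi.sub_apply, hdt, hβd,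
        hαt, zero_add, sub_self]
  · rintro ⟨b, hb, hab⟩
    refine ⟨toForm2 (a - jacobian b), toForm1 b, isForm2_toForm2 _, isForm1_toForm1 b, ?_, ?_,
      Eventually.of_forall fun x u v => ?_⟩
    · filter_upwards [eventually_all.2 fun i => eventually_all.2 (hab i)] with t ht u v
      simp only [toForm2_eq_sum, ht, zero_mul, Finset.sum_const_zero]
    · filter_upwards [eventually_all.2 hb] with t ht u
      simp [toForm1, ht]
    · rw [extD1_toForm1, map_sub]
      exact (sub_add_cancel _ _).symm

lemma smul_mem_zeroRestriction {γ : ℝ → Fin m → ℝ} {q : SmoothFun (Fin m → ℝ)}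
    (hq : q ∈ vanishingIdeal γ) (a : FormCoeffs m) : q • a ∈ zeroRestriction γ :=
  ⟨0, fun _ => zero_mem _, fun i j => by
    simpa [mul_sub] using Ideal.mul_mem_right (a i j - a j i) _ hq⟩

lemma mem_zeroRestriction_of_isSymm (γ : ℝ → Fin m → ℝ) {a : FormCoeffs m} (ha : a.IsSymm) :
    a ∈ zeroRestriction γ :=
  ⟨0, fun _ => zero_mem _, fun i j => by simp [ha.apply i j]⟩

/-- The coefficients of `dxᵢ ∧ dxⱼ`. -/
def wedgeCoeffs (i j : Fin m) : FormCoeffs m := Matrix.single i j 1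

lemma sum_pderiv_smul_wedgeCoeffs_mem {γ : ℝ → Fin m → ℝ} {q : SmoothFun (Fin m → ℝ)}
    (hq : q ∈ vanishingIdeal γ) (j : Fin m) :
    ∑ i, pderiv i q • wedgeCoeffs i j ∈ zeroRestriction γ := by
  refine ⟨Pi.single j q, fun k => ?_, ?_⟩
  · obtain rfl | hkj := eq_or_ne k j
    · simpa using hq
    · simp [hkj]
  · have h : jacobian (Pi.single j q) = ∑ i, pderiv i q • wedgeCoeffs i j := by
      ext1 i k
      obtain rfl | hkj := eq_or_ne k j
      · simp [Matrix.sum_apply, wedgeCoeffs, Matrix.single_apply]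
      · simp [Matrix.sum_apply, wedgeCoeffs, hkj, hkj.symm]
    simp [h]

lemma toForm2_smul_wedgeCoeffs (p : SmoothFun (Fin m → ℝ)) (i j : Fin m) :
    toForm2 (p • wedgeCoeffs i j) = fun x u v => p x * (u i * v j - u j * v i) := by
  ext x u v
  rw [toForm2_apply, Finset.sum_eq_single i, Finset.sum_eq_single j]
  · simp [wedgeCoeffs]
  · intro k _ hk
    simp [wedgeCoeffs, hk.symm]
  · simp
  · intro k _ hk
    simp [wedgeCoeffs, hk.symm]
  · simp

lemma toForm2_wedgeCoeffs (i j : Fin m) : toForm2 (wedgeCoeffs i j) = wedge m i j := by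
  rw [← one_smul (SmoothFun (Fin m → ℝ)) (wedgeCoeffs i j), toForm2_smul_wedgeCoeffs]
  ext x u v
  exact one_mul _

end

/-! ### Restrictions to the curve -/

section

local notation "𝐱" => (coord 0 : SmoothFun (Fin 3 → ℝ))
local notation "𝐲" => (coord 1 : SmoothFun (Fin 3 → ℝ))
local notation "𝐳" => (coord 2 : SmoothFun (Fin 3 → ℝ))

open scoped Manifold ContDiff in
/-- The curve `t ↦ (t ^ 4, t ^ 5, t ^ 6)`. -/
abbrev curve456 : C^∞⟮𝓘(ℝ, ℝ), ℝ; 𝓘(ℝ, Fin 3 → ℝ), Fin 3 → ℝ⟯ := monomialCurve ![4, 5, 6]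

lemma coe_curve456 : ⇑curve456 = fun t => ![t ^ 4, t ^ 5, t ^ 6] := by
  ext t i
  fin_cases i <;> rfl

lemma tendsto_curve456 : Tendsto curve456 (𝓝 0) (𝓝 0) := by
  have h := curve456.contMDiff.continuous.tendsto 0
  have h0 : curve456 0 = 0 := by
    rw [coe_curve456]
    simp
  rwa [h0] at h

lemma y_sq_sub_mem_vanishingIdeal : 𝐲 ^ 2 - 𝐱 * 𝐳 ∈ vanishingIdeal curve456 :=
  Eventually.of_forall fun t => by
    change (t ^ 5) ^ 2 - t ^ 4 * t ^ 6 = 0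
    ring

lemma z_sq_sub_mem_vanishingIdeal : 𝐳 ^ 2 - 𝐱 ^ 3 ∈ vanishingIdeal curve456 :=
  Eventually.of_forall fun t => by
    change (t ^ 6) ^ 2 - (t ^ 4) ^ 3 = 0
    ring

/-- Algebraic restrictions of `2`-forms to `curve456`. -/
abbrev Restriction456 : Type := FormCoeffs 3 ⧸ zeroRestriction curve456

/-- The algebraic restriction of `dxᵢ ∧ dxⱼ`. -/
def dw (i j : Fin 3) : Restriction456 := Submodule.Quotient.mk (wedgeCoeffs i j)

lemma dw_self (i : Fin 3) : dw i i = 0 :=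
  (Submodule.Quotient.mk_eq_zero _).2
    (mem_zeroRestriction_of_isSymm _ (by simp [wedgeCoeffs, Matrix.IsSymm]))

lemma dw_swap (i j : Fin 3) : dw j i = - dw i j := by
  rw [eq_neg_iff_add_eq_zero, dw, dw, ← Submodule.Quotient.mk_add, Submodule.Quotient.mk_eq_zero]
  exact mem_zeroRestriction_of_isSymm _ (by simp [wedgeCoeffs, Matrix.IsSymm, add_comm])

lemma sum_pderiv_smul_dw {q : SmoothFun (Fin 3 → ℝ)} (hq : q ∈ vanishingIdeal curve456)
    (j : Fin 3) : ∑ i, pderiv i q • dw i j = 0 := by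
  have h := (Submodule.Quotient.mk_eq_zero _).2 (sum_pderiv_smul_wedgeCoeffs_mem hq j)
  rw [← Submodule.mkQ_apply, map_sum] at h
  simp only [map_smul] at h
  exact h

lemma smul_eq_zero_of_mem {q : SmoothFun (Fin 3 → ℝ)} (hq : q ∈ vanishingIdeal curve456)
    (r : Restriction456) : q • r = 0 := by
  obtain ⟨a, rfl⟩ := Submodule.Quotient.mk_surjective _ r
  exact (Submodule.Quotient.mk_eq_zero _).2 (smul_mem_zeroRestriction hq a)

lemma y_sq_smul (r : Restriction456) : 𝐲 ^ 2 • r = (𝐱 * 𝐳) • r :=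
  sub_eq_zero.1 ((sub_smul _ _ r).symm.trans (smul_eq_zero_of_mem y_sq_sub_mem_vanishingIdeal r))

lemma z_sq_smul (r : Restriction456) : 𝐳 ^ 2 • r = 𝐱 ^ 3 • r :=
  sub_eq_zero.1 ((sub_smul _ _ r).symm.trans (smul_eq_zero_of_mem z_sq_sub_mem_vanishingIdeal r))

instance : IsAddTorsionFree Restriction456 := .of_isTorsionFree ℝ _

lemma pderiv_y_sq_sub (i : Fin 3) : pderiv i (𝐲 ^ 2 - 𝐱 * 𝐳) = ![-𝐳, 2 * 𝐲, -𝐱] i := by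
  fin_cases i <;> simp [Derivation.leibniz, Derivation.leibniz_pow, two_mul]

lemma pderiv_z_sq_sub (i : Fin 3) : pderiv i (𝐳 ^ 2 - 𝐱 ^ 3) = ![-3 * 𝐱 ^ 2, 0, 2 * 𝐳] i := by
  fin_cases i <;> simp [Derivation.leibniz_pow, two_mul]

lemma x_smul_dw02 : 𝐱 • dw 0 2 = 2 • 𝐲 • dw 0 1 := by
  have h := sum_pderiv_smul_dw y_sq_sub_mem_vanishingIdeal 0
  simp only [Fin.sum_univ_three, pderiv_y_sq_sub, Matrix.cons_val, dw_self, dw_swap 0 1,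
    dw_swap 0 2] at h
  linear_combination (norm := module) h

lemma x_smul_dw12 : 𝐱 • dw 1 2 = 𝐳 • dw 0 1 := by
  have h := sum_pderiv_smul_dw y_sq_sub_mem_vanishingIdeal 1
  simp only [Fin.sum_univ_three, pderiv_y_sq_sub, Matrix.cons_val, dw_self, dw_swap 1 2] at h
  linear_combination (norm := module) h

lemma z_smul_dw02 : 𝐳 • dw 0 2 = 0 := by
  have h : 2 • 𝐳 • dw 0 2 = 0 := by
    have h := sum_pderiv_smul_dw z_sq_sub_mem_vanishingIdeal 0
    simp only [Fin.sum_univ_three, pderiv_z_sq_sub, Matrix.cons_val, dw_self, dw_swap 0 2] at h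
    linear_combination (norm := module) -h
  simpa using h

lemma y_smul_dw12 : 𝐲 • dw 1 2 = 0 := by
  have h : 2 • 𝐲 • dw 1 2 = 0 := by
    have h := sum_pderiv_smul_dw y_sq_sub_mem_vanishingIdeal 2
    simp only [Fin.sum_univ_three, pderiv_y_sq_sub, Matrix.cons_val, dw_self] at h
    linear_combination (norm := module) h + z_smul_dw02
  simpa using h

lemma two_z_smul_dw12_add : 2 • 𝐳 • dw 1 2 + 3 • 𝐱 ^ 2 • dw 0 1 = 0 := by
  have h := sum_pderiv_smul_dw z_sq_sub_mem_vanishingIdeal 1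
  simp only [Fin.sum_univ_three, pderiv_z_sq_sub, Matrix.cons_val, dw_self, dw_swap 1 2] at h
  linear_combination (norm := module) -h

lemma x_sq_smul_dw02 : 𝐱 ^ 2 • dw 0 2 = 0 := by
  have h : 3 • 𝐱 ^ 2 • dw 0 2 = 0 := by
    have h := sum_pderiv_smul_dw z_sq_sub_mem_vanishingIdeal 2
    simp only [Fin.sum_univ_three, pderiv_z_sq_sub, Matrix.cons_val, dw_self] at h
    linear_combination (norm := module) -h
  simpa using h

lemma xy_smul_dw01 : (𝐱 * 𝐲) • dw 0 1 = 0 := by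
  have h : 2 • (𝐱 * 𝐲) • dw 0 1 = 0 := by
    linear_combination (norm := module) x_sq_smul_dw02 - 𝐱 • x_smul_dw02
  simpa using h

lemma yz_smul_dw01 : (𝐲 * 𝐳) • dw 0 1 = 0 := by
  have h : 2 • (𝐲 * 𝐳) • dw 0 1 = 0 := by
    linear_combination (norm := module) 𝐱 • z_smul_dw02 - 𝐳 • x_smul_dw02
  simpa using h

lemma x_cube_smul_dw01 : 𝐱 ^ 3 • dw 0 1 = 0 := by
  have h : 5 • 𝐱 ^ 3 • dw 0 1 = 0 := by
    linear_combination (norm := module)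
      𝐱 • two_z_smul_dw12_add - 2 • 𝐳 • x_smul_dw12 - 2 • z_sq_smul (dw 0 1)
  simpa using h

lemma mk_eq_smul_dw (a : FormCoeffs 3) :
    (Submodule.Quotient.mk a : Restriction456) =
      (a 0 1 - a 1 0) • dw 0 1 + (a 0 2 - a 2 0) • dw 0 2 + (a 1 2 - a 2 1) • dw 1 2 := by
  have ha : a = ∑ i, ∑ j, a i j • wedgeCoeffs i j := by
    conv_lhs => rw [Matrix.matrix_eq_sum_single a]
    simp [wedgeCoeffs]
  have h : (Submodule.Quotient.mk a : Restriction456) = ∑ i, ∑ j, a i j • dw i j := by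
    conv_lhs => rw [ha, ← Submodule.mkQ_apply]
    simp only [map_sum, map_smul]
    rfl
  simp only [h, Fin.sum_univ_three, dw_self, dw_swap 0 1, dw_swap 0 2, dw_swap 1 2]
  module

lemma coord_smul_z_smul_dw12 (i : Fin 3) : coord i • 𝐳 • dw 1 2 = 0 := by
  have hx : 𝐱 • 𝐳 • dw 1 2 = 0 := by
    linear_combination (norm := module)
      𝐳 • x_smul_dw12 + z_sq_smul (dw 0 1) + x_cube_smul_dw01
  have hy : 𝐲 • 𝐳 • dw 1 2 = 0 := by
    linear_combination (norm := module) 𝐳 • y_smul_dw12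
  have hz : 𝐳 • 𝐳 • dw 1 2 = 0 := by
    linear_combination (norm := module) z_sq_smul (dw 1 2) + 𝐱 ^ 2 • x_smul_dw12
      - 𝐱 • y_sq_smul (dw 0 1) + 𝐲 • xy_smul_dw01
  fin_cases i <;> assumption

lemma coord_smul_y_sq_smul_dw01 (i : Fin 3) : coord i • 𝐲 ^ 2 • dw 0 1 = 0 := by
  have hx : 𝐱 • 𝐲 ^ 2 • dw 0 1 = 0 := by
    linear_combination (norm := module) 𝐲 • xy_smul_dw01
  have hy : 𝐲 • 𝐲 ^ 2 • dw 0 1 = 0 := by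
    linear_combination (norm := module) 𝐲 • y_sq_smul (dw 0 1) + 𝐳 • xy_smul_dw01
  have hz : 𝐳 • 𝐲 ^ 2 • dw 0 1 = 0 := by
    linear_combination (norm := module) 𝐲 • yz_smul_dw01
  fin_cases i <;> assumption

/-- The submodule generated by the restrictions of `z dy ∧ dz` and `y ^ 2 dx ∧ dy`, which are killed
by the coordinates. -/
def socle456 : Submodule (SmoothFun (Fin 3 → ℝ)) Restriction456 :=
  Submodule.span _ {𝐳 • dw 1 2, 𝐲 ^ 2 • dw 0 1}

lemma z_smul_dw12_mem : 𝐳 • dw 1 2 ∈ socle456 := Submodule.subset_span (by simp)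

lemma y_sq_smul_dw01_mem : 𝐲 ^ 2 • dw 0 1 ∈ socle456 := Submodule.subset_span (by simp)

lemma coord_smul_coord_smul_dw01_mem (i j : Fin 3) (hij : i ≤ j) :
    coord i • coord j • dw 0 1 ∈ socle456 := by
  have hxx : 𝐱 • 𝐱 • dw 0 1 ∈ socle456 := by
    have h : 𝐱 ^ 2 • dw 0 1 = (-2 / 3 : ℝ) • 𝐳 • dw 1 2 := by
      have h := two_z_smul_dw12_add
      generalize 𝐳 • dw 1 2 = v, 𝐱 ^ 2 • dw 0 1 = w at h ⊢
      linear_combination (norm := module) (1 / 3 : ℝ) • h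
    rw [← mul_smul, ← sq, h]
    exact socle456.smul_of_tower_mem _ z_smul_dw12_mem
  have hxy : 𝐱 • 𝐲 • dw 0 1 ∈ socle456 := by
    rw [← mul_smul, xy_smul_dw01]
    exact zero_mem _
  have hxz : 𝐱 • 𝐳 • dw 0 1 ∈ socle456 := by
    rw [← mul_smul, ← y_sq_smul]
    exact y_sq_smul_dw01_mem
  have hyy : 𝐲 • 𝐲 • dw 0 1 ∈ socle456 := by
    rw [← mul_smul, ← sq]
    exact y_sq_smul_dw01_mem
  have hyz : 𝐲 • 𝐳 • dw 0 1 ∈ socle456 := by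
    rw [← mul_smul, yz_smul_dw01]
    exact zero_mem _
  have hzz : 𝐳 • 𝐳 • dw 0 1 ∈ socle456 := by
    rw [← mul_smul, ← sq, z_sq_smul, x_cube_smul_dw01]
    exact zero_mem _
  match i, j with
  | 0, 0 => exact hxx
  | 0, 1 => exact hxy
  | 0, 2 => exact hxz
  | 1, 1 => exact hyy
  | 1, 2 => exact hyz
  | 2, 2 => exact hzz

lemma coord_smul_coord_smul_dw02_mem (i j : Fin 3) (hij : i ≤ j) :
    coord i • coord j • dw 0 2 ∈ socle456 := by
  have hxy : 𝐱 • 𝐲 • dw 0 2 ∈ socle456 := by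
    have h : 𝐱 • 𝐲 • dw 0 2 = 2 • 𝐲 ^ 2 • dw 0 1 := by
      linear_combination (norm := module) 𝐲 • x_smul_dw02
    exact h ▸ nsmul_mem y_sq_smul_dw01_mem 2
  have hyy : 𝐲 • 𝐲 • dw 0 2 = 0 := by
    linear_combination (norm := module) y_sq_smul (dw 0 2) + 𝐱 • z_smul_dw02
  match i, j with
  | 0, 0 => simp [← mul_smul, ← sq, x_sq_smul_dw02]
  | 0, 1 => exact hxy
  | 1, 1 => simp [hyy]
  | 0, 2 | 1, 2 | 2, 2 => simp [z_smul_dw02]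

lemma coord_smul_coord_smul_dw12_mem (i j : Fin 3) (hij : i ≤ j) :
    coord i • coord j • dw 1 2 ∈ socle456 := by
  have hxx : 𝐱 • 𝐱 • dw 1 2 = 𝐲 ^ 2 • dw 0 1 := by
    linear_combination (norm := module) 𝐱 • x_smul_dw12 - y_sq_smul (dw 0 1)
  match i, j with
  | 0, 0 => exact hxx ▸ y_sq_smul_dw01_mem
  | 0, 1 | 1, 1 => simp [y_smul_dw12]
  | 0, 2 | 1, 2 | 2, 2 => simp [coord_smul_z_smul_dw12]

lemma smul_mem_socle456 {p : SmoothFun (Fin 3 → ℝ)} (hp : p ∈ coordIdeal 3 ^ 2)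
    (r : Restriction456) : p • r ∈ socle456 := by
  obtain ⟨a, rfl⟩ := Submodule.Quotient.mk_surjective _ r
  simp only [mk_eq_smul_dw, smul_add, smul_comm p]
  exact add_mem (add_mem
    (socle456.smul_mem _ (smul_mem_of_mem_coordIdeal_sq coord_smul_coord_smul_dw01_mem hp))
    (socle456.smul_mem _ (smul_mem_of_mem_coordIdeal_sq coord_smul_coord_smul_dw02_mem hp)))
    (socle456.smul_mem _ (smul_mem_of_mem_coordIdeal_sq coord_smul_coord_smul_dw12_mem hp))

lemma exists_of_mem_socle456 {r : Restriction456} (hr : r ∈ socle456) :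
    ∃ s t : ℝ, r = s • 𝐳 • dw 1 2 + t • 𝐲 ^ 2 • dw 0 1 := by
  obtain ⟨p, q, rfl⟩ := Submodule.mem_span_pair.1 hr
  exact ⟨p 0, q 0, by rw [smul_eq_apply_zero_smul coord_smul_z_smul_dw12,
    smul_eq_apply_zero_smul coord_smul_y_sq_smul_dw01]⟩

lemma exists_smul_eq_taylor (p : SmoothFun (Fin 3 → ℝ)) (r : Restriction456) :
    ∃ τ ∈ socle456, p • r = p 0 • r + ∑ i, pderiv i p 0 • coord i • r + τ := by
  refine ⟨_, smul_mem_socle456 (taylor_sub_mem_coordIdeal_sq p) r, ?_⟩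
  simp only [sub_smul, add_smul, Finset.sum_smul, mul_smul, algebraMap_smul]
  abel

/-- The coefficient matrices of the forms `basis456`. -/
def basisCoeffs456 : Fin 8 → FormCoeffs 3 :=
  ![wedgeCoeffs 0 1, wedgeCoeffs 0 2, wedgeCoeffs 1 2,
    𝐱 • wedgeCoeffs 0 1, 𝐱 • wedgeCoeffs 0 2, 𝐲 • wedgeCoeffs 0 2 + 𝐱 • wedgeCoeffs 1 2,
    𝐳 • wedgeCoeffs 1 2, 𝐲 ^ 2 • wedgeCoeffs 0 1]

lemma toForm2_basisCoeffs456 : ∀ k, toForm2 (basisCoeffs456 k) = basis456 k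
  | 0 => toForm2_wedgeCoeffs 0 1
  | 1 => toForm2_wedgeCoeffs 0 2
  | 2 => toForm2_wedgeCoeffs 1 2
  | 3 => toForm2_smul_wedgeCoeffs 𝐱 0 1
  | 4 => toForm2_smul_wedgeCoeffs 𝐱 0 2
  | 5 => (map_add toForm2 _ _).trans <|
      congr_arg₂ _ (toForm2_smul_wedgeCoeffs 𝐲 0 2) (toForm2_smul_wedgeCoeffs 𝐱 1 2)
  | 6 => toForm2_smul_wedgeCoeffs 𝐳 1 2
  | 7 => toForm2_smul_wedgeCoeffs (𝐲 ^ 2) 0 1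

lemma mk_sum_smul_basisCoeffs456 (c : Fin 8 → ℝ) :
    (Submodule.Quotient.mk (∑ k, c k • basisCoeffs456 k) : Restriction456) =
      c 0 • dw 0 1 + c 1 • dw 0 2 + c 2 • dw 1 2 + c 3 • 𝐱 • dw 0 1 + c 4 • 𝐱 • dw 0 2 +
        c 5 • (𝐲 • dw 0 2 + 𝐱 • dw 1 2) + c 6 • 𝐳 • dw 1 2 + c 7 • 𝐲 ^ 2 • dw 0 1 := by
  rw [Fin.sum_univ_eight]
  rfl

theorem exists_sub_sum_basisCoeffs456_mem {a : FormCoeffs 3}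
    (ha : pderiv 0 (a 1 2 - a 2 1) 0 - pderiv 1 (a 0 2 - a 2 0) 0 +
      pderiv 2 (a 0 1 - a 1 0) 0 = 0) :
    ∃ c : Fin 8 → ℝ, a - ∑ k, c k • basisCoeffs456 k ∈ zeroRestriction curve456 := by
  set A := a 0 1 - a 1 0 with hA
  set B := a 0 2 - a 2 0 with hB
  set C := a 1 2 - a 2 1 with hC
  obtain ⟨τA, hτA, hAw⟩ := exists_smul_eq_taylor A (dw 0 1)
  obtain ⟨τB, hτB, hBw⟩ := exists_smul_eq_taylor B (dw 0 2)
  obtain ⟨τC, hτC, hCw⟩ := exists_smul_eq_taylor C (dw 1 2)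
  obtain ⟨s, t, hst⟩ := exists_of_mem_socle456 (add_mem (add_mem hτA hτB) hτC)
  obtain ⟨d, hd⟩ : ∃ d, pderiv 1 A 0 = d + d := ⟨_, (add_halves _).symm⟩
  refine ⟨![A 0, B 0, C 0, pderiv 0 A 0, pderiv 0 B 0 + d, pderiv 1 B 0, pderiv 2 C 0 + s, t], ?_⟩
  rw [← Submodule.Quotient.mk_eq_zero, Submodule.Quotient.mk_sub, mk_eq_smul_dw a, sub_eq_zero,
    ← hA, ← hB, ← hC, hAw, hBw, hCw, mk_sum_smul_basisCoeffs456]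
  have hB1 : pderiv 1 B 0 = pderiv 0 C 0 + pderiv 2 A 0 := by linarith
  simp only [Fin.sum_univ_three, Matrix.cons_val, hd, hB1, z_smul_dw02, y_smul_dw12, x_smul_dw02,
    x_smul_dw12]
  linear_combination (norm := module) hst

/-! ### Dual functionals -/

open PowerSeries (X coeff)

local notation "𝚿" => (curveSeries ![4, 5, 6] : SmoothFun (Fin 3 → ℝ) →ₐ[ℝ] PowerSeries ℝ)

lemma weighted_coeff_curveSeries456_pderiv {b : SmoothFun (Fin 3 → ℝ)}
    (hb : b ∈ vanishingIdeal curve456) (w : ℕ) (p q r d : ℤ)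
    (hd : ∀ i j k : ℕ, i * 4 + j * 5 + k * 6 = w → p * i + q * j + r * k = d) :
    (p : ℝ) * coeff w (X ^ 4 * 𝚿 (pderiv 0 b)) + q * coeff w (X ^ 5 * 𝚿 (pderiv 1 b)) +
      r * coeff w (X ^ 6 * 𝚿 (pderiv 2 b)) = 0 := by
  have h := coeff_sum_X_pow_mul_curveSeries_pderiv_eq_zero (n := ![4, 5, 6]) (by decide)
    (l := ![p, q, r]) (d := d) (fun k hk => by
      rw [Fin.sum_univ_three] at hk ⊢
      exact hd _ _ _ hk) hb
  simp only [Fin.sum_univ_three, map_add, map_zsmul, Matrix.cons_val] at h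
  simpa only [zsmul_eq_mul] using h

lemma coeff_curveSeries456_pderiv_relations {b : SmoothFun (Fin 3 → ℝ)} {D : Fin 3 → ℕ → ℝ}
    (hb : b ∈ vanishingIdeal curve456)
    (hD : ∀ i n, coeff n (𝚿 (pderiv i b)) = D i n) :
    (D 0 0 = 0 ∧ D 0 4 = 0 ∧ D 0 5 = 0 ∧ D 0 9 = 0) ∧
    (D 1 0 = 0 ∧ D 1 4 = 0 ∧ D 1 6 = 0 ∧ D 1 8 = 0) ∧
    (D 2 0 = 0 ∧ D 2 5 = 0 ∧ D 2 4 = -(1 / 2) * D 1 5 ∧ D 2 6 = -(2 / 3) * D 0 8 ∧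
      D 2 8 = D 0 10 ∧ D 2 9 = -(1 / 2) * D 1 10) := by
  have key := weighted_coeff_curveSeries456_pderiv hb
  simp only [PowerSeries.coeff_X_pow_mul', hD] at key
  have h10 : D 1 5 + 2 * D 2 4 = 0 := by simpa using key 10 0 1 2 2 (by omega)
  have h12 : 2 * D 0 8 + 3 * D 2 6 = 0 := by simpa using key 12 2 0 3 6 (by omega)
  have h14 : D 0 10 + -D 2 8 = 0 := by simpa using key 14 1 0 (-1) 1 (by omega)
  have h15 : D 1 10 + 2 * D 2 9 = 0 := by simpa using key 15 0 1 2 3 (by omega)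
  refine ⟨⟨?_, ?_, ?_, ?_⟩, ⟨?_, ?_, ?_, ?_⟩, ?_, ?_, ?_, ?_, ?_, ?_⟩
  · simpa using key 4 1 0 0 1 (by omega)
  · simpa using key 8 1 0 0 2 (by omega)
  · simpa using key 9 1 0 0 1 (by omega)
  · simpa using key 13 1 0 0 2 (by omega)
  · simpa using key 5 0 1 0 1 (by omega)
  · simpa using key 9 0 1 0 1 (by omega)
  · simpa using key 11 0 1 0 1 (by omega)
  · simpa using key 13 0 1 0 1 (by omega)
  · simpa using key 6 0 0 1 1 (by omega)
  · simpa using key 11 0 0 1 1 (by omega)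
  all_goals linarith

/-- The coefficient of `t ^ n` in the restriction to the curve of the `dxᵢ ∧ dxⱼ`-coefficient of a
`2`-form. -/
def curveCoeff (i j : Fin 3) (n : ℕ) : FormCoeffs 3 →ₗ[ℝ] ℝ :=
  coeff n ∘ₗ (𝚿).toLinearMap ∘ₗ
    (Matrix.entryLinearMap ℝ (SmoothFun (Fin 3 → ℝ)) i j - Matrix.entryLinearMap ℝ _ j i)

lemma curveCoeff_apply (i j : Fin 3) (n : ℕ) (a : FormCoeffs 3) :
    curveCoeff i j n a = coeff n (𝚿 (a i j - a j i)) := rfl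

/-- The functionals dual to `basis456`. -/
def dual456 : FormCoeffs 3 →ₗ[ℝ] Fin 8 → ℝ :=
  LinearMap.pi ![curveCoeff 0 1 0, curveCoeff 0 2 0, curveCoeff 1 2 0, curveCoeff 0 1 4,
    curveCoeff 0 2 4 + (1 / 2 : ℝ) • curveCoeff 0 1 5, curveCoeff 0 2 5,
    curveCoeff 1 2 6 - (2 / 3 : ℝ) • curveCoeff 0 1 8,
    curveCoeff 0 1 10 + (2 : ℝ) • curveCoeff 0 2 9 + curveCoeff 1 2 8]

lemma dual456_eq_zero {a : FormCoeffs 3} (ha : a ∈ zeroRestriction curve456) :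
    dual456 a = 0 := by
  obtain ⟨b, hb, hab⟩ := ha
  choose D hD using fun j i n => (⟨_, rfl⟩ : ∃ d, coeff n (𝚿 (pderiv i (b j))) = d)
  have hw (i j : Fin 3) (n : ℕ) : curveCoeff i j n a = D j i n - D i j n := by
    have h : a i j - a j i - (pderiv i (b j) - pderiv j (b i)) ∈
        vanishingIdeal curve456 := by
      simpa [sub_sub_sub_comm] using hab i j
    have h0 := curveSeries_eq_zero h
    rw [map_sub, sub_eq_zero] at h0
    rw [curveCoeff_apply, h0, map_sub, map_sub, hD, hD]
  have h (j : Fin 3) := coeff_curveSeries456_pderiv_relations (hb j) (hD j)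
  ext k
  match k with
  | 0 | 1 | 2 | 3 | 4 | 5 | 6 | 7 =>
    simp only [dual456, LinearMap.pi_apply, Matrix.cons_val, LinearMap.add_apply,
      LinearMap.sub_apply, LinearMap.smul_apply, smul_eq_mul, hw, h, Pi.zero_apply]
    ring

lemma dual456_sum_smul_basisCoeffs456 (c : Fin 8 → ℝ) :
    dual456 (∑ k, c k • basisCoeffs456 k) = c := by
  set a := ∑ k, c k • basisCoeffs456 k with ha
  rw [Fin.sum_univ_eight] at ha
  have hA : a 0 1 - a 1 0 = c 0 • 1 + c 3 • 𝐱 + c 7 • 𝐲 ^ 2 := by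
    simp [ha, basisCoeffs456, wedgeCoeffs]
  have hB : a 0 2 - a 2 0 = c 1 • 1 + c 4 • 𝐱 + c 5 • 𝐲 := by
    simp [ha, basisCoeffs456, wedgeCoeffs]
  have hC : a 1 2 - a 2 1 = c 2 • 1 + c 5 • 𝐱 + c 6 • 𝐳 := by
    simp [ha, basisCoeffs456, wedgeCoeffs]
  ext k
  match k with
  | 0 | 1 | 2 | 3 | 4 | 5 | 6 | 7 =>
    simp [dual456, curveCoeff_apply, hA, hB, hC, curveSeries_coord, ← pow_mul,
      PowerSeries.coeff_X_pow, PowerSeries.coeff_one]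

end

lemma toForm2_sub_sum_basisCoeffs456 (a : FormCoeffs 3) (c : Fin 8 → ℝ) (x u v : Fin 3 → ℝ) :
    toForm2 (a - ∑ k, c k • basisCoeffs456 k) x u v =
      toForm2 a x u v - ∑ k, c k * basis456 k x u v := by
  simp only [map_sub, map_sum, map_smul, toForm2_basisCoeffs456, Pi.sub_apply, Finset.sum_apply]
  rfl

lemma zeroAR2_sub_sum_basis456_iff {ω : Form2 3} {a : FormCoeffs 3}
    (ha : ∀ᶠ x in 𝓝 0, ω x = toForm2 a x) (c : Fin 8 → ℝ) :
    ZeroAR2 3 (fun x u v => ω x u v - ∑ k, c k * basis456 k x u v)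
        (fun t => ![t ^ 4, t ^ 5, t ^ 6]) ↔
      a - ∑ k, c k • basisCoeffs456 k ∈ zeroRestriction curve456 := by
  have h : ∀ᶠ x in 𝓝 0, (fun u v => ω x u v - ∑ k, c k * basis456 k x u v) =
      toForm2 (a - ∑ k, c k • basisCoeffs456 k) x :=
    ha.mono fun x hx => by
      ext u v
      rw [hx, toForm2_sub_sum_basisCoeffs456]
  rw [← zeroAR2_toForm2_iff tendsto_curve456, coe_curve456]
  exact ⟨.congr h, .congr (h.mono fun _ => Eq.symm)⟩

lemma dual456_eq_of_sub_mem {a : FormCoeffs 3} {c : Fin 8 → ℝ}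
    (hc : a - ∑ k, c k • basisCoeffs456 k ∈ zeroRestriction curve456) : dual456 a = c := by
  have h := dual456_eq_zero hc
  rwa [map_sub, dual456_sum_smul_basisCoeffs456, sub_eq_zero] at h

/-- The algebraic restrictions to `g(t) = (t⁴,t⁵,t⁶)` of the eight closed 2-forms above
form a basis of the space of algebraic restrictions of closed 2-forms. -/
theorem algRestriction_basis_456
    (ω : Form2 3) (hω : IsForm2 3 ω) (hcl : Closed2 3 ω) :
    ∃! c : Fin 8 → ℝ,
      ZeroAR2 3 (fun x u v => ω x u v - ∑ k, c k * basis456 k x u v)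
        (fun t => ![t^4, t^5, t^6]) := by
  obtain ⟨a, ha⟩ := hω.exists_eventually_eq_toForm2
  simp only [zeroAR2_sub_sum_basis456_iff ha]
  obtain ⟨c, hc⟩ := exists_sub_sum_basisCoeffs456_mem (hcl.sum_pderiv_eq_zero ha 0 1 2)
  exact ⟨c, hc, fun c' hc' => (dual456_eq_of_sub_mem hc').symm.trans (dual456_eq_of_sub_mem hc)⟩
end
end

section
/- Let g:(ℝ,0)→(ℝ^3,0) be the curve-germ g(t) = (t^4,t^5,t^7). For every germ at 0 of a smooth differential 2-form ω on ℝ^3 with dω = 0 on a neighbourhood of 0, there exist unique real numbers c_1,…,c_9 such that the 2-form ω − (c_1·dx_1∧dx_2 + c_2·dx_1∧dx_3 + c_3·dx_2∧dx_3 + c_4·x_1dx_1∧dx_2 + c_5·x_2dx_1∧dx_2 + c_6·x_1dx_1∧dx_3 + c_7·(x_2dx_1∧dx_3 + x_1dx_2∧dx_3) + c_8·x_2dx_2∧dx_3 + c_9·x_3dx_1∧dx_3) has zero algebraic restriction to g. (Equivalently: the algebraic restrictions to g of these nine closed 2-forms form a basis of the vector space of algebraic restrictions of closed 2-forms to g.)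 -/
open Filter Topology

noncomputable section

/-- The nine closed 2-forms of Proposition 6.2: `dx₁∧dx₂, dx₁∧dx₃, dx₂∧dx₃,
x₁dx₁∧dx₂, x₂dx₁∧dx₂, x₁dx₁∧dx₃, x₂dx₁∧dx₃ + x₁dx₂∧dx₃, x₂dx₂∧dx₃, x₃dx₁∧dx₃`. -/
def basis457 : Fin 9 → Form2 3 :=
  ![wedge 3 0 1, wedge 3 0 2, wedge 3 1 2,
    mwedge 3 0 0 1, mwedge 3 1 0 1, mwedge 3 0 0 2,
    fun x u v => x 1 * (u 0 * v 2 - u 2 * v 0) + x 0 * (u 1 * v 2 - u 2 * v 1),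
    mwedge 3 1 1 2, mwedge 3 2 0 2]

/-! Give `xᵢ` and `dxᵢ` the weights `4, 5, 7`, for which the curve is quasi-homogeneous. Along the
curve a smooth form is then a sum of quasi-homogeneous forms, recorded by the Taylor coefficients
of its coefficient functions, up to terms of arbitrarily high weight, and `ω` has zero algebraic
restriction exactly when it agrees along the curve with some `dβ`, where `β` vanishes on the
curve.

The forms `β = (x^a - x^b) dxⱼ` with monomials `x^a`, `x^b` of equal weight supply such exact
forms. They exhaust weight 19 and all weights from 21 on, one direction in each of the weights 16,
17 and 18, and two in weight 20. Closedness of `ω` gives one linear relation in each of the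
weights 16 and 20, and nine combinations of Taylor coefficients remain. They vanish on every `dβ`
because a weight `n` with few monomials admits operators `∑ᵢ cᵢ xᵢ ∂ᵢ - a` killing all monomials
of weight `n`; for `H` vanishing on the curve this yields linear relations between the Taylor
coefficients of the functions `∂ᵢH` along the curve. -/

section AlgebraicRestrictions

open scoped ContDiff

section TaylorCoefficients

/-- The `n`-th Taylor coefficient at `0` of a function of one real variable. -/
def taylorCoeff (n : ℕ) (φ : ℝ → ℝ) : ℝ := iteratedDeriv n φ 0 / n.factorial

variable {n : ℕ} {φ ψ : ℝ → ℝ}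

lemma taylorCoeff_congr (h : φ =ᶠ[𝓝 0] ψ) : taylorCoeff n φ = taylorCoeff n ψ := by
  rw [taylorCoeff, h.iteratedDeriv_eq, taylorCoeff]

lemma taylorCoeff_add (hφ : ContDiffAt ℝ n φ 0) (hψ : ContDiffAt ℝ n ψ 0) :
    taylorCoeff n (fun t => φ t + ψ t) = taylorCoeff n φ + taylorCoeff n ψ := by
  simp only [taylorCoeff, iteratedDeriv_fun_add hφ hψ, add_div]

lemma taylorCoeff_sub (hφ : ContDiffAt ℝ n φ 0) (hψ : ContDiffAt ℝ n ψ 0) :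
    taylorCoeff n (fun t => φ t - ψ t) = taylorCoeff n φ - taylorCoeff n ψ := by
  simp only [taylorCoeff, iteratedDeriv_fun_sub hφ hψ, sub_div]

lemma taylorCoeff_const_mul (c : ℝ) (φ : ℝ → ℝ) :
    taylorCoeff n (fun t => c * φ t) = c * taylorCoeff n φ := by
  simp only [taylorCoeff, iteratedDeriv_const_mul_field, mul_div_assoc]

lemma taylorCoeff_sum {κ : Type*} {s : Finset κ} {φ : κ → ℝ → ℝ}
    (hφ : ∀ i ∈ s, ContDiffAt ℝ n (φ i) 0) :
    taylorCoeff n (fun t => ∑ i ∈ s, φ i t) = ∑ i ∈ s, taylorCoeff n (φ i) := by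
  simp only [taylorCoeff, iteratedDeriv_fun_sum hφ, Finset.sum_div]

lemma taylorCoeff_pow (n k : ℕ) : taylorCoeff n (fun t => t ^ k) = if n = k then 1 else 0 := by
  rw [taylorCoeff, iteratedDeriv_fun_pow_zero]
  split_ifs with h
  · rw [h, div_self (mod_cast k.factorial_ne_zero)]
  · simp

lemma taylorCoeff_const (n : ℕ) (c : ℝ) :
    taylorCoeff n (fun _ => c) = if n = 0 then c else 0 := by
  have := (taylorCoeff_const_mul (n := n) c fun t => t ^ 0).trans (by rw [taylorCoeff_pow])
  simpa using this

lemma iteratedDeriv_pow_mul_zero (k : ℕ) (hφ : ContDiffAt ℝ n φ 0) :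
    iteratedDeriv n (fun t => t ^ k * φ t) 0 =
      if k ≤ n then n.choose k * k.factorial * iteratedDeriv (n - k) φ 0 else 0 := by
  rw [iteratedDeriv_fun_mul (by fun_prop) hφ]
  simp only [iteratedDeriv_fun_pow_zero, Nat.cast_ite, Nat.cast_zero, mul_ite, ite_mul, mul_zero,
    zero_mul, Finset.sum_ite_eq', Finset.mem_range, Nat.lt_succ_iff]

lemma taylorCoeff_pow_mul (k : ℕ) (hφ : ContDiffAt ℝ n φ 0) :
    taylorCoeff n (fun t => t ^ k * φ t) = if k ≤ n then taylorCoeff (n - k) φ else 0 := by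
  rw [taylorCoeff, iteratedDeriv_pow_mul_zero k hφ]
  split_ifs with hk
  · rw [taylorCoeff, ← Nat.choose_mul_factorial_mul_factorial hk]
    push_cast
    have choose_ne_zero := (Nat.choose_pos hk).ne'
    field_simp
  · rw [zero_div]

end TaylorCoefficients

section HadamardLemma

universe u v

variable {E : Type u} [NormedAddCommGroup E] [NormedSpace ℝ E]

lemma hasFDerivAt_integral_pow_smul_comp_smul [ProperSpace E] {G : Type v} [NormedAddCommGroup G]
    [NormedSpace ℝ G] (k : ℕ) {φ : E → G} (hφ : ContDiff ℝ 1 φ) (x : E) :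
    HasFDerivAt (fun x => ∫ s in (0 : ℝ)..1, s ^ k • φ (s • x))
      (∫ s in (0 : ℝ)..1, s ^ (k + 1) • fderiv ℝ φ (s • x)) x := by
  have continuous_deriv : Continuous (fderiv ℝ φ) := hφ.continuous_fderiv one_ne_zero
  have continuous_self : Continuous φ := hφ.continuous
  obtain ⟨C, hC⟩ := (isCompact_closedBall (0 : E) (‖x‖ + 1)).exists_bound_of_continuousOn
    continuous_deriv.continuousOn
  refine intervalIntegral.hasFDerivAt_integral_of_dominated_of_fderiv_le
    (F' := fun x s => s ^ (k + 1) • fderiv ℝ φ (s • x)) (bound := fun _ => C)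
    (Metric.ball_mem_nhds x one_pos)
    (.of_forall fun y => Continuous.aestronglyMeasurable (by fun_prop))
    (Continuous.intervalIntegrable (by fun_prop) _ _)
    (Continuous.aestronglyMeasurable (by fun_prop))
    (.of_forall fun s hs y hy => ?_) intervalIntegrable_const
    (.of_forall fun s _ y _ => ?_)
  · rw [Set.uIoc_of_le zero_le_one] at hs
    have norm_s : ‖s‖ ≤ 1 := by rw [Real.norm_of_nonneg hs.1.le]; exact hs.2
    have norm_y : ‖y‖ ≤ ‖x‖ + 1 := by
      have := norm_le_norm_add_norm_sub' y x
      rw [mem_ball_iff_norm] at hy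
      linarith
    have mem_ball : s • y ∈ Metric.closedBall (0 : E) (‖x‖ + 1) := by
      rw [mem_closedBall_zero_iff, norm_smul]
      exact (mul_le_of_le_one_left (norm_nonneg y) norm_s).trans norm_y
    rw [norm_smul, norm_pow]
    exact (mul_le_of_le_one_left (norm_nonneg _)
      (pow_le_one₀ (norm_nonneg s) norm_s)).trans (hC _ mem_ball)
  · have scaling : HasFDerivAt (fun y : E => s • y) (s • ContinuousLinearMap.id ℝ E) y :=
      (hasFDerivAt_id y).const_smul s
    have chain := (((hφ.differentiable one_ne_zero) (s • y)).hasFDerivAt.comp y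
      scaling).const_smul (s ^ k)
    refine chain.congr_fderiv ?_
    ext v
    simp [pow_succ, mul_smul]

lemma contDiff_nat_integral_pow_smul_comp_smul [ProperSpace E] (n : ℕ) :
    ∀ {G : Type (max u v)} [NormedAddCommGroup G] [NormedSpace ℝ G] (k : ℕ) {φ : E → G},
      ContDiff ℝ (n + 1) φ → ContDiff ℝ n fun x => ∫ s in (0 : ℝ)..1, s ^ k • φ (s • x) := by
  induction n with
  | zero =>
    intro G _ _ k φ hφ
    refine contDiff_zero.2 (continuous_iff_continuousAt.2 fun x => ?_)
    exact (hasFDerivAt_integral_pow_smul_comp_smul k (by simpa using hφ) x).continuousAt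
  | succ n ih =>
    intro G _ _ k φ hφ
    refine contDiff_succ_iff_hasFDerivAt.2 ⟨_, ih (k + 1) (φ := fderiv ℝ φ)
      (hφ.fderiv_right (by simp)), fun x =>
      hasFDerivAt_integral_pow_smul_comp_smul k (hφ.of_le ?_) x⟩
    exact mod_cast Nat.le_add_left 1 (n + 1)

lemma exists_contDiff_eq_add_clm_apply [ProperSpace E] {F : Type v} [NormedAddCommGroup F]
    [NormedSpace ℝ F] [CompleteSpace F] {f : E → F} (hf : ContDiff ℝ ∞ f) :
    ∃ Φ : E → E →L[ℝ] F, ContDiff ℝ ∞ Φ ∧ ∀ x, f x = f 0 + Φ x x := by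
  have smooth_deriv : ContDiff ℝ ∞ (fderiv ℝ f) := hf.fderiv_right (by simp)
  have continuous_deriv := smooth_deriv.continuous
  refine ⟨fun x => ∫ s in (0 : ℝ)..1, fderiv ℝ f (s • x), contDiff_infty.2 fun n => ?_,
    fun x => ?_⟩
  · have := contDiff_nat_integral_pow_smul_comp_smul (G := E →L[ℝ] F) n 0
      (contDiff_infty.1 smooth_deriv (n + 1))
    simpa only [pow_zero, one_smul] using this
  have along_ray : ∀ s : ℝ, HasDerivAt (fun s : ℝ => f (s • x)) (fderiv ℝ f (s • x) x) s := by
    intro s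
    have ray : HasDerivAt (fun s : ℝ => s • x) ((1 : ℝ) • x) s := (hasDerivAt_id s).smul_const x
    simpa [Function.comp_def] using
      (hf.differentiable (by simp) (s • x)).hasFDerivAt.comp_hasDerivAt s ray
  rw [ContinuousLinearMap.intervalIntegral_apply
      (Continuous.intervalIntegrable (by fun_prop) _ _),
    intervalIntegral.integral_eq_sub_of_hasDerivAt (fun s _ => along_ray s)
      (Continuous.intervalIntegrable (by fun_prop) _ _)]
  simp

lemma clm_apply_eq_sum {ι : Type*} [Fintype ι] [DecidableEq ι] (L : (ι → ℝ) →L[ℝ] ℝ)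
    (x : ι → ℝ) : L x = ∑ i, x i * L (Pi.single i 1) := by
  conv_lhs => rw [pi_eq_sum_univ' x]
  simp only [map_sum, map_smul, smul_eq_mul]

lemma exists_contDiff_eq_add_sum {ι : Type u} [Fintype ι] {f : (ι → ℝ) → ℝ}
    (hf : ContDiff ℝ ∞ f) :
    ∃ q : ι → (ι → ℝ) → ℝ, (∀ i, ContDiff ℝ ∞ (q i)) ∧ ∀ x, f x = f 0 + ∑ i, x i * q i x := by
  classical
  obtain ⟨Φ, hΦ, f_eq⟩ := exists_contDiff_eq_add_clm_apply hf
  refine ⟨fun i x => Φ x (Pi.single i 1), fun i => hΦ.clm_apply contDiff_const, fun x => ?_⟩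
  rw [f_eq, clm_apply_eq_sum]

lemma exists_contDiff_eventuallyEq [FiniteDimensional ℝ E] {n : ℕ∞} {f : E → ℝ} {x : E}
    {U : Set E} (hU : U ∈ 𝓝 x) (hf : ContDiffOn ℝ n f U) :
    ∃ F : E → ℝ, ContDiff ℝ n F ∧ f =ᶠ[𝓝 x] F := by
  obtain ⟨ρ, ρ_pos, ball_subset⟩ := Metric.mem_nhds_iff.1 hU
  let b : ContDiffBump x := ⟨ρ / 4, ρ / 2, by linarith, by linarith⟩
  refine ⟨fun y => b y * f y, contDiff_iff_contDiffAt.2 fun y => ?_, ?_⟩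
  · by_cases hy : y ∈ Metric.ball x ρ
    · exact b.contDiffAt.mul
        (hf.contDiffAt (mem_of_superset (Metric.isOpen_ball.mem_nhds hy) ball_subset))
    · have not_mem : y ∉ tsupport b := by
        rw [b.tsupport_eq]
        exact fun h => hy (Metric.closedBall_subset_ball (by linarith : ρ / 2 < ρ) h)
      refine contDiffAt_const (c := 0) |>.congr_of_eventuallyEq ?_
      filter_upwards [notMem_tsupport_iff_eventuallyEq.1 not_mem] with z hz
      rw [hz, Pi.zero_apply, zero_mul]
  · filter_upwards [b.eventuallyEq_one] with y hy
    rw [hy, Pi.one_apply, one_mul]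

end HadamardLemma

section PartialDerivatives

variable {ι : Type*} [DecidableEq ι] {f g : (ι → ℝ) → ℝ} {x : ι → ℝ}

/-- The partial derivative `∂f/∂xᵢ`. -/
def partialDeriv (i : ι) (f : (ι → ℝ) → ℝ) (x : ι → ℝ) : ℝ := fderiv ℝ f x (Pi.single i 1)

lemma partialDeriv_congr (i : ι) (h : f =ᶠ[𝓝 x] g) : partialDeriv i f x = partialDeriv i g x := by
  rw [partialDeriv, h.fderiv_eq, partialDeriv]

lemma partialDeriv_zero (i : ι) (x : ι → ℝ) : partialDeriv i (0 : (ι → ℝ) → ℝ) x = 0 := by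
  simp [partialDeriv]

lemma contDiff_partialDeriv [Fintype ι] (i : ι) (hf : ContDiff ℝ ∞ f) :
    ContDiff ℝ ∞ (partialDeriv i f) :=
  (hf.fderiv_right (by simp)).clm_apply contDiff_const

variable [Finite ι]

lemma partialDeriv_const_smul (i : ι) (c : ℝ) (f : (ι → ℝ) → ℝ) (x : ι → ℝ) :
    partialDeriv i (c • f) x = c * partialDeriv i f x := by
  have := Fintype.ofFinite ι
  simp [partialDeriv, fderiv_const_smul_field]

lemma partialDeriv_add (i : ι) (hf : DifferentiableAt ℝ f x) (hg : DifferentiableAt ℝ g x) :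
    partialDeriv i (f + g) x = partialDeriv i f x + partialDeriv i g x := by
  have := Fintype.ofFinite ι
  simp [partialDeriv, fderiv_add hf hg]

lemma partialDeriv_sub (i : ι) (hf : DifferentiableAt ℝ f x) (hg : DifferentiableAt ℝ g x) :
    partialDeriv i (f - g) x = partialDeriv i f x - partialDeriv i g x := by
  have := Fintype.ofFinite ι
  simp [partialDeriv, fderiv_sub hf hg]

lemma partialDeriv_mul (i : ι) (hf : DifferentiableAt ℝ f x) (hg : DifferentiableAt ℝ g x) :
    partialDeriv i (fun x => f x * g x) x =
      partialDeriv i f x * g x + f x * partialDeriv i g x := by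
  have := Fintype.ofFinite ι
  simp [partialDeriv, fderiv_fun_mul hf hg]
  ring

end PartialDerivatives

section Monomials

variable {ι : Type*}

lemma sub_single_add_single [DecidableEq ι] {α : ι → ℕ} {i : ι} (h : 0 < α i) :
    α - Pi.single i 1 + Pi.single i 1 = α :=
  tsub_add_cancel_of_le (update_le_iff.2 ⟨h, fun _ _ => Nat.zero_le _⟩)

variable [Fintype ι]

/-- The monomial function `x ↦ x ^ α`. -/
def monomialFun (α : ι → ℕ) (x : ι → ℝ) : ℝ := ∏ i, x i ^ α i

@[fun_prop]
lemma contDiff_monomialFun (α : ι → ℕ) {n : WithTop ℕ∞} : ContDiff ℝ n (monomialFun α) :=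
  contDiff_prod fun i _ => (contDiff_apply ℝ ℝ i).pow (α i)

lemma monomialFun_zero (x : ι → ℝ) : monomialFun 0 x = 1 := by
  simp [monomialFun]

lemma monomialFun_add_single [DecidableEq ι] (α : ι → ℕ) (i : ι) (x : ι → ℝ) :
    monomialFun (α + Pi.single i 1) x = x i * monomialFun α x := by
  simp only [monomialFun, Pi.add_apply, pow_add, Finset.prod_mul_distrib]
  rw [mul_comm]
  simp [Pi.single_apply, pow_ite]

lemma partialDeriv_monomialFun [DecidableEq ι] (i : ι) (α : ι → ℕ) (x : ι → ℝ) :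
    partialDeriv i (monomialFun α) x = α i * monomialFun (α - Pi.single i 1) x := by
  have along_axis : (fun s : ℝ => monomialFun α (x + s • Pi.single i 1)) =
      fun s => (x i + s) ^ α i * ∏ j ∈ Finset.univ.erase i, x j ^ α j := by
    funext s
    rw [monomialFun, ← Finset.mul_prod_erase _ _ (Finset.mem_univ i)]
    congr 1
    · simp
    · refine Finset.prod_congr rfl fun j hj => ?_
      simp [Pi.single_eq_of_ne (Finset.ne_of_mem_erase hj)]
  have deriv_eq : HasDerivAt (fun s : ℝ => monomialFun α (x + s • Pi.single i 1))
      (α i * x i ^ (α i - 1) * ∏ j ∈ Finset.univ.erase i, x j ^ α j) 0 := by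
    rw [along_axis]
    simpa using (((hasDerivAt_id (0 : ℝ)).const_add (x i)).pow (α i)).mul_const _
  have : DifferentiableAt ℝ (monomialFun α) x :=
    (contDiff_monomialFun α (n := 1)).differentiable one_ne_zero x
  rw [partialDeriv, ← this.lineDeriv_eq_fderiv, lineDeriv, deriv_eq.deriv, monomialFun,
    ← Finset.mul_prod_erase _ _ (Finset.mem_univ i), mul_assoc]
  congr 2
  · simp
  · refine Finset.prod_congr rfl fun j hj => ?_
    simp [Pi.single_eq_of_ne (Finset.ne_of_mem_erase hj)]

lemma coord_mul_partialDeriv_monomialFun [DecidableEq ι] (i : ι) (α : ι → ℕ) (x : ι → ℝ) :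
    x i * partialDeriv i (monomialFun α) x = α i * monomialFun α x := by
  rcases Nat.eq_zero_or_pos (α i) with h | h
  · simp [partialDeriv_monomialFun, h]
  · rw [partialDeriv_monomialFun, mul_left_comm, ← monomialFun_add_single, sub_single_add_single h]

end Monomials

section WeightedJets

variable {ι : Type*} [Fintype ι] (w : ι → ℕ)

/-- The monomial curve `t ↦ (t ^ wᵢ)ᵢ` with exponents `w`. -/
def monomialCurve (t : ℝ) : ι → ℝ := fun i => t ^ w i

/-- Polynomials all of whose monomials have `w`-weight less than `N`. -/
def polynomialsBelow (N : ℕ) : Submodule ℝ ((ι → ℝ) → ℝ) :=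
  Submodule.span ℝ (monomialFun '' {α | w ⬝ᵥ α < N})

/-- The `N`-th ideal of the filtration of the ring of smooth functions by `w`-weight: it is
generated by the monomials of weight at least `N`. -/
def weightFiltration (N : ℕ) : Submodule ℝ ((ι → ℝ) → ℝ) :=
  Submodule.span ℝ {F | ∃ α f, N ≤ w ⬝ᵥ α ∧ ContDiff ℝ ∞ f ∧ F = fun x => monomialFun α x * f x}

variable {w} {N : ℕ} {F : (ι → ℝ) → ℝ}

@[fun_prop]
lemma contDiff_monomialCurve {n : WithTop ℕ∞} : ContDiff ℝ n (monomialCurve w) :=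
  contDiff_pi.2 fun i => contDiff_id.pow (w i)

lemma contDiffAt_comp_monomialCurve (hF : ContDiff ℝ ∞ F) (n : ℕ) :
    ContDiffAt ℝ n (fun t => F (monomialCurve w t)) 0 :=
  (contDiff_infty.1 (hF.comp contDiff_monomialCurve) n).contDiffAt

lemma monomialFun_monomialCurve (α : ι → ℕ) (t : ℝ) :
    monomialFun α (monomialCurve w t) = t ^ (w ⬝ᵥ α) := by
  simp [monomialFun, monomialCurve, dotProduct, ← pow_mul, Finset.prod_pow_eq_pow_sum]

lemma partialDeriv_monomialFun_monomialCurve [DecidableEq ι] (i : ι) (α : ι → ℕ) (t : ℝ) :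
    partialDeriv i (monomialFun α) (monomialCurve w t) = α i * t ^ (w ⬝ᵥ α - w i) := by
  rcases Nat.eq_zero_or_pos (α i) with h | h
  · simp [partialDeriv_monomialFun, h]
  · have : w ⬝ᵥ α = w ⬝ᵥ (α - Pi.single i 1) + w i := by
      rw [← dotProduct_single_one w i, ← dotProduct_add, sub_single_add_single h]
    rw [partialDeriv_monomialFun, monomialFun_monomialCurve, this, Nat.add_sub_cancel]

lemma contDiff_of_mem_polynomialsBelow (hF : F ∈ polynomialsBelow w N) : ContDiff ℝ ∞ F := by
  induction hF using Submodule.span_induction with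
  | mem F hF => obtain ⟨α, -, rfl⟩ := hF; fun_prop
  | zero => exact contDiff_const
  | add F G _ _ ihF ihG => exact ihF.add ihG
  | smul c F _ ih => exact contDiff_const.smul ih

lemma contDiff_of_mem_weightFiltration (hF : F ∈ weightFiltration w N) : ContDiff ℝ ∞ F := by
  induction hF using Submodule.span_induction with
  | mem F hF => obtain ⟨α, f, -, hf, rfl⟩ := hF; fun_prop
  | zero => exact contDiff_const
  | add F G _ _ ihF ihG => exact ihF.add ihG
  | smul c F _ ih => exact contDiff_const.smul ih

lemma exists_pow_mul_of_mem_weightFiltration (hF : F ∈ weightFiltration w N) :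
    ∃ φ : ℝ → ℝ, ContDiff ℝ ∞ φ ∧ ∀ t, F (monomialCurve w t) = t ^ N * φ t := by
  induction hF using Submodule.span_induction with
  | mem F hF =>
    obtain ⟨α, f, hα, hf, rfl⟩ := hF
    refine ⟨fun t => t ^ (w ⬝ᵥ α - N) * f (monomialCurve w t), by fun_prop, fun t => ?_⟩
    beta_reduce
    rw [monomialFun_monomialCurve, ← mul_assoc, ← pow_add, Nat.add_sub_cancel' hα]
  | zero => exact ⟨0, contDiff_const, by simp⟩
  | add F G _ _ ihF ihG =>
    obtain ⟨φ, hφ, F_eq⟩ := ihF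
    obtain ⟨ψ, hψ, G_eq⟩ := ihG
    exact ⟨φ + ψ, hφ.add hψ, fun t => by simp [F_eq, G_eq, mul_add]⟩
  | smul c F _ ih =>
    obtain ⟨φ, hφ, F_eq⟩ := ih
    exact ⟨c • φ, contDiff_const.smul hφ, fun t => by simp [F_eq, mul_left_comm]⟩

lemma taylorCoeff_comp_of_mem_weightFiltration {n : ℕ} (hF : F ∈ weightFiltration w N)
    (hn : n < N) : taylorCoeff n (fun t => F (monomialCurve w t)) = 0 := by
  obtain ⟨φ, hφ, F_eq⟩ := exists_pow_mul_of_mem_weightFiltration hF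
  simp only [F_eq]
  rw [taylorCoeff_pow_mul N (contDiff_infty.1 hφ n).contDiffAt, if_neg (by omega)]

lemma coord_mul_partialDeriv_mem_weightFiltration [DecidableEq ι] (i : ι)
    (hF : F ∈ weightFiltration w N) :
    (fun x => x i * partialDeriv i F x) ∈ weightFiltration w N := by
  induction hF using Submodule.span_induction with
  | mem F hF =>
    obtain ⟨α, f, hα, hf, rfl⟩ := hF
    refine Submodule.subset_span ⟨α, fun x => α i * f x + x i * partialDeriv i f x, hα, ?_, ?_⟩
    · have := contDiff_partialDeriv i hf
      fun_prop
    · funext x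
      rw [partialDeriv_mul i ((contDiff_monomialFun α (n := 1)).differentiable one_ne_zero x)
        (hf.differentiable (by simp) x)]
      linear_combination f x * coord_mul_partialDeriv_monomialFun i α x
  | zero =>
    simp only [partialDeriv_zero, mul_zero]
    exact Submodule.zero_mem _
  | add F G hF hG ihF ihG =>
    convert Submodule.add_mem _ ihF ihG using 1
    funext x
    rw [partialDeriv_add i
      ((contDiff_of_mem_weightFiltration hF).differentiable (by simp) x)
      ((contDiff_of_mem_weightFiltration hG).differentiable (by simp) x)]
    exact mul_add _ _ _
  | smul c F _ ih =>
    convert Submodule.smul_mem _ c ih using 1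
    funext x
    rw [partialDeriv_const_smul, Pi.smul_apply, smul_eq_mul, mul_left_comm]

lemma polynomialsBelow_mono {M N : ℕ} (h : M ≤ N) : polynomialsBelow w M ≤ polynomialsBelow w N :=
  Submodule.span_mono (Set.image_mono fun _ hα => lt_of_lt_of_le hα h)

lemma weightFiltration_le_sup (hw : ∀ i, 0 < w i) (N : ℕ) :
    weightFiltration w N ≤ polynomialsBelow w (N + 1) ⊔ weightFiltration w (N + 1) := by
  classical
  refine Submodule.span_le.2 ?_
  rintro F ⟨α, f, hα, hf, rfl⟩
  rcases hα.eq_or_lt with hα | hα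
  · obtain ⟨q, hq, f_eq⟩ := exists_contDiff_eq_add_sum hf
    have split : (fun x => monomialFun α x * f x) = f 0 • monomialFun α +
        ∑ i, fun x => monomialFun (α + Pi.single i 1) x * q i x := by
      funext x
      simp only [f_eq x, monomialFun_add_single, Pi.add_apply, Pi.smul_apply, smul_eq_mul,
        Finset.sum_apply, mul_add, Finset.mul_sum]
      congr 1
      · ring
      · exact Finset.sum_congr rfl fun i _ => by ring
    rw [split]
    refine Submodule.add_mem_sup (Submodule.smul_mem _ _ (Submodule.subset_span ⟨α, ?_, rfl⟩))
      (Submodule.sum_mem _ fun i _ => Submodule.subset_span ⟨_, q i, ?_, hq i, rfl⟩)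
    · exact hα ▸ N.lt_succ_self
    · rw [dotProduct_add, dotProduct_single_one, ← hα]
      exact Nat.add_le_add_left (hw i) N
  · exact Submodule.mem_sup_right (Submodule.subset_span ⟨α, f, hα, hf, rfl⟩)

lemma mem_sup_of_contDiff (hw : ∀ i, 0 < w i) {f : (ι → ℝ) → ℝ} (hf : ContDiff ℝ ∞ f) (N : ℕ) :
    f ∈ polynomialsBelow w N ⊔ weightFiltration w N := by
  induction N with
  | zero =>
    exact Submodule.mem_sup_right (Submodule.subset_span
      ⟨0, f, Nat.zero_le _, hf, by simp [monomialFun_zero]⟩)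
  | succ N ih =>
    exact sup_le ((polynomialsBelow_mono N.le_succ).trans le_sup_left)
      (weightFiltration_le_sup hw N) ih

lemma eq_sum_taylorCoeff_of_mem_polynomialsBelow {N : ℕ} {F : (ι → ℝ) → ℝ}
    (hF : F ∈ polynomialsBelow w N) (t : ℝ) : F (monomialCurve w t) =
      ∑ n ∈ Finset.range N, taylorCoeff n (fun t => F (monomialCurve w t)) * t ^ n := by
  have smooth {G : (ι → ℝ) → ℝ} (hG : G ∈ polynomialsBelow w N) :=
    contDiffAt_comp_monomialCurve (w := w) (contDiff_of_mem_polynomialsBelow hG)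
  induction hF using Submodule.span_induction with
  | mem F hF =>
    obtain ⟨α, hα : w ⬝ᵥ α < N, rfl⟩ := hF
    simp [monomialFun_monomialCurve, taylorCoeff_pow, hα]
  | zero => simp [taylorCoeff_const]
  | add F G hF hG ihF ihG =>
    simp only [Pi.add_apply, taylorCoeff_add (smooth hF _) (smooth hG _), add_mul,
      Finset.sum_add_distrib, ← ihF, ← ihG]
  | smul c F _ ih =>
    simp only [Pi.smul_apply, smul_eq_mul, taylorCoeff_const_mul, mul_assoc, ← Finset.mul_sum, ← ih]

lemma exists_taylor_comp_monomialCurve (hw : ∀ i, 0 < w i) {f : (ι → ℝ) → ℝ}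
    (hf : ContDiff ℝ ∞ f) (N : ℕ) :
    ∃ r ∈ weightFiltration w N, ∀ t, f (monomialCurve w t) =
      ∑ n ∈ Finset.range N, taylorCoeff n (fun t => f (monomialCurve w t)) * t ^ n +
        r (monomialCurve w t) := by
  obtain ⟨p, hp, r, hr, rfl⟩ := Submodule.mem_sup.1 (mem_sup_of_contDiff hw hf N)
  refine ⟨r, hr, fun t => ?_⟩
  have coeff_eq : ∀ n ∈ Finset.range N, taylorCoeff n (fun t => (p + r) (monomialCurve w t)) =
      taylorCoeff n (fun t => p (monomialCurve w t)) := by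
    intro n hn
    have := taylorCoeff_add
      (contDiffAt_comp_monomialCurve (w := w) (contDiff_of_mem_polynomialsBelow hp) n)
      (contDiffAt_comp_monomialCurve (w := w) (contDiff_of_mem_weightFiltration hr) n)
    refine this.trans (add_eq_left.2 ?_)
    exact taylorCoeff_comp_of_mem_weightFiltration hr (Finset.mem_range.1 hn)
  rw [Finset.sum_congr rfl fun n hn => by rw [coeff_eq n hn],
    ← eq_sum_taylorCoeff_of_mem_polynomialsBelow hp, Pi.add_apply]

section Euler

variable [DecidableEq ι] (c : ι → ℝ) (a : ℝ) {N : ℕ} {F G : (ι → ℝ) → ℝ}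

/-- The first-order operator `∑ᵢ cᵢ xᵢ ∂/∂xᵢ - a`. Monomials are its eigenvectors, so it can be
chosen to kill the monomials of a given weight. -/
def eulerOperator (F : (ι → ℝ) → ℝ) (x : ι → ℝ) : ℝ :=
  ∑ i, c i * (x i * partialDeriv i F x) - a * F x

lemma eulerOperator_monomialFun (α : ι → ℕ) :
    eulerOperator c a (monomialFun α) = (∑ i, c i * α i - a) • monomialFun α := by
  funext x
  simp only [eulerOperator, coord_mul_partialDeriv_monomialFun, Pi.smul_apply, smul_eq_mul, sub_mul,
    Finset.sum_mul, mul_assoc]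

lemma eulerOperator_add (hF : Differentiable ℝ F) (hG : Differentiable ℝ G) :
    eulerOperator c a (F + G) = eulerOperator c a F + eulerOperator c a G := by
  funext x
  simp only [eulerOperator, partialDeriv_add _ (hF x) (hG x), Pi.add_apply, mul_add,
    Finset.sum_add_distrib]
  ring

lemma eulerOperator_const_smul (b : ℝ) (F : (ι → ℝ) → ℝ) :
    eulerOperator c a (b • F) = b • eulerOperator c a F := by
  funext x
  simp only [eulerOperator, partialDeriv_const_smul, Pi.smul_apply, smul_eq_mul, mul_sub,
    Finset.mul_sum, mul_left_comm b]

variable {c a}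

lemma eulerOperator_mem_weightFiltration (hF : F ∈ weightFiltration w N) :
    eulerOperator c a F ∈ weightFiltration w N := by
  have : eulerOperator c a F =
      ∑ i, c i • (fun x => x i * partialDeriv i F x) - a • F := by
    funext x
    simp [eulerOperator]
  rw [this]
  exact Submodule.sub_mem _ (Submodule.sum_mem _ fun i _ => Submodule.smul_mem _ _
    (coord_mul_partialDeriv_mem_weightFiltration i hF)) (Submodule.smul_mem _ _ hF)

lemma contDiff_eulerOperator (hF : ContDiff ℝ ∞ F) : ContDiff ℝ ∞ (eulerOperator c a F) := by
  have := fun i => contDiff_partialDeriv i hF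
  unfold eulerOperator
  fun_prop

lemma taylorCoeff_eulerOperator_of_mem_polynomialsBelow {n : ℕ}
    (h : ∀ α, w ⬝ᵥ α = n → ∑ i, c i * α i = a) (hF : F ∈ polynomialsBelow w N) :
    taylorCoeff n (fun t => eulerOperator c a F (monomialCurve w t)) = 0 := by
  have smooth {G : (ι → ℝ) → ℝ} (hG : G ∈ polynomialsBelow w N) :=
    contDiffAt_comp_monomialCurve (w := w)
      (contDiff_eulerOperator (c := c) (a := a) (contDiff_of_mem_polynomialsBelow hG)) n
  induction hF using Submodule.span_induction with
  | mem F hF =>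
    obtain ⟨α, -, rfl⟩ := hF
    simp only [eulerOperator_monomialFun, Pi.smul_apply, smul_eq_mul, monomialFun_monomialCurve,
      taylorCoeff_const_mul, taylorCoeff_pow, mul_ite, mul_one, mul_zero, ite_eq_right_iff]
    exact fun hα => sub_eq_zero.2 (h α hα.symm)
  | zero => simp [eulerOperator, partialDeriv_zero, taylorCoeff_const]
  | add F G hF hG ihF ihG =>
    have differentiable {G : (ι → ℝ) → ℝ} (hG : G ∈ polynomialsBelow w N) : Differentiable ℝ G :=
      (contDiff_of_mem_polynomialsBelow hG).differentiable (by simp)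
    simp only [eulerOperator_add c a (differentiable hF) (differentiable hG), Pi.add_apply]
    rw [taylorCoeff_add (smooth hF) (smooth hG), ihF, ihG, add_zero]
  | smul b F _ ih =>
    simp only [eulerOperator_const_smul, Pi.smul_apply, smul_eq_mul, taylorCoeff_const_mul, ih,
      mul_zero]

lemma taylorCoeff_eulerOperator_comp_monomialCurve (hw : ∀ i, 0 < w i) {n : ℕ}
    (h : ∀ α, w ⬝ᵥ α = n → ∑ i, c i * α i = a) (hF : ContDiff ℝ ∞ F) :
    taylorCoeff n (fun t => eulerOperator c a F (monomialCurve w t)) = 0 := by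
  obtain ⟨p, hp, r, hr, rfl⟩ := Submodule.mem_sup.1 (mem_sup_of_contDiff hw hF (n + 1))
  have smooth_p := contDiff_of_mem_polynomialsBelow hp
  have smooth_r := contDiff_of_mem_weightFiltration hr
  rw [eulerOperator_add c a (smooth_p.differentiable (by simp))
    (smooth_r.differentiable (by simp))]
  refine (taylorCoeff_add
    (contDiffAt_comp_monomialCurve (contDiff_eulerOperator smooth_p) n)
    (contDiffAt_comp_monomialCurve (contDiff_eulerOperator smooth_r) n)).trans ?_
  rw [taylorCoeff_eulerOperator_of_mem_polynomialsBelow h hp,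
    taylorCoeff_comp_of_mem_weightFiltration (eulerOperator_mem_weightFiltration hr) n.lt_succ_self,
    add_zero]

lemma sum_taylorCoeff_partialDeriv_comp_monomialCurve (hw : ∀ i, 0 < w i) {n : ℕ}
    (h : ∀ α, w ⬝ᵥ α = n → ∑ i, c i * α i = a) (hF : ContDiff ℝ ∞ F) :
    ∑ i, c i * taylorCoeff n (fun t => t ^ w i * partialDeriv i F (monomialCurve w t)) =
      a * taylorCoeff n (fun t => F (monomialCurve w t)) := by
  have smooth_F := contDiffAt_comp_monomialCurve (w := w) hF n
  have smooth_terms : ∀ i ∈ Finset.univ, ContDiffAt ℝ n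
      (fun t => c i * (t ^ w i * partialDeriv i F (monomialCurve w t))) 0 := by
    intro i _
    have := contDiffAt_comp_monomialCurve (w := w) (contDiff_partialDeriv i hF) n
    fun_prop
  have := taylorCoeff_eulerOperator_comp_monomialCurve hw h hF
  simp only [eulerOperator, monomialCurve] at this
  rw [taylorCoeff_sub (ContDiffAt.sum smooth_terms) (contDiffAt_const.mul smooth_F),
    taylorCoeff_sum smooth_terms] at this
  simp only [taylorCoeff_const_mul] at this
  exact sub_eq_zero.1 this

lemma taylorCoeff_partialDeriv_comp_monomialCurve (hw : ∀ i, 0 < w i) {n a : ℕ} {i : ι}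
    (h : ∀ α, w ⬝ᵥ α = n + w i → α i = a) (hF : ContDiff ℝ ∞ F) :
    taylorCoeff n (fun t => partialDeriv i F (monomialCurve w t)) =
      a * taylorCoeff (n + w i) (fun t => F (monomialCurve w t)) := by
  have := sum_taylorCoeff_partialDeriv_comp_monomialCurve (n := n + w i) (c := Pi.single i 1)
    (a := a) hw (fun α hα => by simp [Pi.single_apply, h α hα]) hF
  simpa [Pi.single_apply, taylorCoeff_pow_mul _ (contDiffAt_comp_monomialCurve (w := w)
    (contDiff_partialDeriv i hF) (n + w i))] using this

end Euler

lemma taylorCoeff_comp_monomialCurve_of_forall_ne (hw : ∀ i, 0 < w i) {n : ℕ}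
    (h : ∀ α, w ⬝ᵥ α ≠ n) (hF : ContDiff ℝ ∞ F) :
    taylorCoeff n (fun t => F (monomialCurve w t)) = 0 := by
  classical
  simpa using (sum_taylorCoeff_partialDeriv_comp_monomialCurve (c := 0) (a := 1) hw
    (fun α hα => absurd hα (h α)) hF).symm

end WeightedJets

section SmoothForms

variable {m : ℕ} {η θ : Form2 m}

/-- The coefficients `η(eᵢ, eⱼ)` of a 2-form at a point. -/
def form2Coeff (η : Form2 m) (x : Fin m → ℝ) (i j : Fin m) : ℝ :=
  η x (Pi.single i 1) (Pi.single j 1)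

lemma IsForm2.apply_eq_sum (hη : IsForm2 m η) (x u v : Fin m → ℝ) :
    η x u v = ∑ i, ∑ j, u i * v j * form2Coeff η x i j := by
  obtain ⟨linear, antisymm, -⟩ := hη
  have expand_left (u v : Fin m → ℝ) : η x u v = ∑ i, u i * η x (Pi.single i 1) v := by
    have zero_left : η x 0 v = 0 := by simpa using linear x 0 0 v 1
    let L : (Fin m → ℝ) →ₗ[ℝ] ℝ :=
      { toFun := fun u => η x u v
        map_add' := fun u₁ u₂ => by simpa using linear x u₁ u₂ v 1
        map_smul' := fun c u => by simpa [zero_left] using linear x 0 u v c }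
    exact clm_apply_eq_sum L.toContinuousLinearMap u
  rw [expand_left]
  refine Finset.sum_congr rfl fun i _ => ?_
  rw [antisymm, expand_left, ← Finset.sum_neg_distrib, Finset.mul_sum]
  refine Finset.sum_congr rfl fun j _ => ?_
  rw [← mul_neg, ← antisymm, ← mul_assoc, form2Coeff]

lemma IsForm2.add (hη : IsForm2 m η) (hθ : IsForm2 m θ) :
    IsForm2 m fun x u v => η x u v + θ x u v := by
  refine ⟨fun x u₁ u₂ v c => ?_, fun x u v => ?_, fun u v => ?_⟩
  · simp only [hη.1, hθ.1]
    ring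
  · simp only [hη.2.1 x u v, hθ.2.1 x u v]
    ring
  · obtain ⟨U, hU, smooth_η⟩ := hη.2.2 u v
    obtain ⟨V, hV, smooth_θ⟩ := hθ.2.2 u v
    exact ⟨U ∩ V, inter_mem hU hV,
      (smooth_η.mono Set.inter_subset_left).add (smooth_θ.mono Set.inter_subset_right)⟩

lemma IsForm2.const_mul (c : ℝ) (hη : IsForm2 m η) : IsForm2 m fun x u v => c * η x u v := by
  refine ⟨fun x u₁ u₂ v b => ?_, fun x u v => ?_, fun u v => ?_⟩
  · simp only [hη.1]
    ring
  · simp only [hη.2.1 x u v, mul_neg]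
  · obtain ⟨U, hU, smooth⟩ := hη.2.2 u v
    exact ⟨U, hU, contDiffOn_const.mul smooth⟩

lemma IsForm2.sub (hη : IsForm2 m η) (hθ : IsForm2 m θ) :
    IsForm2 m fun x u v => η x u v - θ x u v := by
  simpa only [sub_eq_add_neg, neg_one_mul] using hη.add (hθ.const_mul (-1))

lemma IsForm2.eventually_differentiableAt (hη : IsForm2 m η) :
    ∀ᶠ x in 𝓝 0, ∀ u v, DifferentiableAt ℝ (fun x => η x u v) x := by
  have coeff_differentiable (i j : Fin m) :
      ∀ᶠ x in 𝓝 0, DifferentiableAt ℝ (fun x => form2Coeff η x i j) x := by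
    obtain ⟨U, hU, smooth⟩ := hη.2.2 (Pi.single i 1) (Pi.single j 1)
    filter_upwards [eventually_mem_nhds_iff.2 hU] with x hx
    exact (smooth.contDiffAt hx).differentiableAt (by simp)
  filter_upwards [eventually_all.2 fun i => eventually_all.2 (coeff_differentiable i)] with x hx u v
  simp only [hη.apply_eq_sum]
  fun_prop

lemma IsForm2.extD2_add (hη : IsForm2 m η) (hθ : IsForm2 m θ) :
    ∀ᶠ x in 𝓝 0, ∀ u v w, extD2 m (fun x u v => η x u v + θ x u v) x u v w =
      extD2 m η x u v w + extD2 m θ x u v w := by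
  filter_upwards [hη.eventually_differentiableAt, hθ.eventually_differentiableAt]
    with x differentiable_η differentiable_θ u v w
  have fderiv_eq (u v : Fin m → ℝ) := fderiv_fun_add (differentiable_η u v) (differentiable_θ u v)
  simp only [extD2, fderiv_eq, add_apply]
  ring

/-- The space of closed smooth 2-forms on `ℝ^m`. -/
def closedForms (m : ℕ) : Submodule ℝ ((Fin m → ℝ) → (Fin m → ℝ) → (Fin m → ℝ) → ℝ) where
  carrier := {η | IsForm2 m η ∧ Closed2 m η}
  zero_mem' := ⟨⟨by simp, by simp, fun _ _ => ⟨Set.univ, univ_mem, contDiffOn_const⟩⟩,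
    .of_forall fun x u v w => by simp [extD2]⟩
  add_mem' := by
    rintro η θ ⟨hη, closed_η⟩ ⟨hθ, closed_θ⟩
    refine ⟨hη.add hθ, ?_⟩
    filter_upwards [closed_η, closed_θ, hη.extD2_add hθ] with x hηx hθx extD2_add u v w
    exact (extD2_add u v w).trans (by rw [hηx, hθx, add_zero])
  smul_mem' := by
    rintro c η ⟨hη, closed_η⟩
    refine ⟨hη.const_mul c, ?_⟩
    filter_upwards [closed_η, hη.eventually_differentiableAt] with x hx differentiable u v w
    have fderiv_eq (u v : Fin m → ℝ) := fderiv_const_mul (differentiable u v) c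
    specialize hx u v w
    simp only [extD2, Pi.smul_apply, smul_eq_mul, fderiv_eq, smul_apply] at hx ⊢
    linear_combination c * hx

end SmoothForms

section ExactAlongCurve

variable {m : ℕ}

/-- The 1-form `∑ᵢ hᵢ dxᵢ`. -/
def form1OfCoeff (h : Fin m → (Fin m → ℝ) → ℝ) : Form1 m := fun x u => ∑ i, h i x * u i

/-- The coefficients `∂ᵢhⱼ - ∂ⱼhᵢ` of the exterior derivative of `∑ᵢ hᵢ dxᵢ`. -/
def curlCoeff (h : Fin m → (Fin m → ℝ) → ℝ) (x : Fin m → ℝ) (i j : Fin m) : ℝ :=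
  partialDeriv i (h j) x - partialDeriv j (h i) x

variable {h : Fin m → (Fin m → ℝ) → ℝ}

lemma contDiff_form1OfCoeff (hh : ∀ i, ContDiff ℝ ∞ (h i)) (u : Fin m → ℝ) :
    ContDiff ℝ ∞ fun x => form1OfCoeff h x u :=
  ContDiff.sum fun i _ => (hh i).mul contDiff_const

lemma isForm1_form1OfCoeff (hh : ∀ i, ContDiff ℝ ∞ (h i)) : IsForm1 m (form1OfCoeff h) := by
  refine ⟨fun x u₁ u₂ c => ?_,
    fun u => ⟨Set.univ, univ_mem, (contDiff_form1OfCoeff hh u).contDiffOn⟩⟩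
  simp only [form1OfCoeff, Pi.add_apply, Pi.smul_apply, smul_eq_mul, mul_add,
    Finset.sum_add_distrib, Finset.mul_sum, mul_left_comm c]

lemma extD1_form1OfCoeff (hh : ∀ i, ContDiff ℝ ∞ (h i)) (x u v : Fin m → ℝ) :
    extD1 m (form1OfCoeff h) x u v = ∑ i, ∑ j, u i * v j * curlCoeff h x i j := by
  have fderiv_eq (u v : Fin m → ℝ) : fderiv ℝ (fun y => form1OfCoeff h y v) x u =
      ∑ i, ∑ j, u i * v j * partialDeriv i (h j) x := by
    have differentiable (i : Fin m) : DifferentiableAt ℝ (h i) x :=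
      (hh i).differentiable (by simp) x
    unfold form1OfCoeff
    rw [fderiv_fun_sum fun i _ => (differentiable i).mul_const _, sum_apply,
      Finset.sum_comm]
    refine Finset.sum_congr rfl fun j _ => ?_
    rw [fderiv_mul_const (differentiable j), smul_apply,
      clm_apply_eq_sum (fderiv ℝ (h j) x), smul_eq_mul, Finset.mul_sum]
    exact Finset.sum_congr rfl fun i _ => by rw [partialDeriv]; ring
  rw [extD1, fderiv_eq, fderiv_eq, Finset.sum_comm (f := fun i j => v i * u j * _),
    ← Finset.sum_sub_distrib]
  refine Finset.sum_congr rfl fun i _ => ?_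
  rw [← Finset.sum_sub_distrib]
  exact Finset.sum_congr rfl fun j _ => by rw [curlCoeff]; ring

lemma contDiff_curlCoeff (hh : ∀ i, ContDiff ℝ ∞ (h i)) (i j : Fin m) :
    ContDiff ℝ ∞ fun x => curlCoeff h x i j :=
  (contDiff_partialDeriv i (hh j)).sub (contDiff_partialDeriv j (hh i))

lemma isForm2_extD1_form1OfCoeff (hh : ∀ i, ContDiff ℝ ∞ (h i)) :
    IsForm2 m (extD1 m (form1OfCoeff h)) := by
  refine ⟨fun x u₁ u₂ v c => ?_, fun x u v => (neg_sub _ _).symm,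
    fun u v => ⟨Set.univ, univ_mem, ContDiff.contDiffOn ?_⟩⟩
  · simp only [extD1_form1OfCoeff hh, Pi.add_apply, Pi.smul_apply, smul_eq_mul, add_mul,
      Finset.sum_add_distrib, Finset.mul_sum, mul_assoc]
  · have := contDiff_curlCoeff hh
    simp only [extD1_form1OfCoeff hh]
    fun_prop

lemma curlCoeff_add {h₁ h₂ : Fin m → (Fin m → ℝ) → ℝ} (hh₁ : ∀ i, ContDiff ℝ ∞ (h₁ i))
    (hh₂ : ∀ i, ContDiff ℝ ∞ (h₂ i)) (x : Fin m → ℝ) :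
    curlCoeff (h₁ + h₂) x = curlCoeff h₁ x + curlCoeff h₂ x := by
  have differentiable {h : Fin m → (Fin m → ℝ) → ℝ} (hh : ∀ i, ContDiff ℝ ∞ (h i)) (i) :
    DifferentiableAt ℝ (h i) x := (hh i).differentiable (by simp) x
  funext i j
  simp only [curlCoeff, Pi.add_apply,
    partialDeriv_add _ (differentiable hh₁ _) (differentiable hh₂ _)]
  ring

lemma curlCoeff_mul_of_eq_zero {f : (Fin m → ℝ) → ℝ} (hf : ContDiff ℝ ∞ f)
    (hh : ∀ i, ContDiff ℝ ∞ (h i)) {x : Fin m → ℝ} (hx : ∀ i, h i x = 0) :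
    curlCoeff (fun i x => f x * h i x) x = f x • curlCoeff h x := by
  funext i j
  simp only [curlCoeff, Pi.smul_apply, smul_eq_mul]
  rw [partialDeriv_mul i (hf.differentiable (by simp) x) ((hh j).differentiable (by simp) x),
    partialDeriv_mul j (hf.differentiable (by simp) x) ((hh i).differentiable (by simp) x),
    hx, hx]
  ring

variable {γ : ℝ → Fin m → ℝ} {ξ : ℝ → Fin m → Fin m → ℝ}

/-- The germs along `γ` of coefficients of exact forms `dβ`, where `β` is a smooth 1-form
vanishing on the image of `γ`. -/
def exactAlong (γ : ℝ → Fin m → ℝ) : Submodule ℝ (ℝ → Fin m → Fin m → ℝ) where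
  carrier := {ξ | ∃ h : Fin m → (Fin m → ℝ) → ℝ, (∀ i, ContDiff ℝ ∞ (h i)) ∧
    (∀ᶠ t in 𝓝 0, ∀ i, h i (γ t) = 0) ∧ ξ =ᶠ[𝓝 0] fun t => curlCoeff h (γ t)}
  zero_mem' := ⟨0, fun _ => contDiff_const, by simp, .of_forall fun t => by
    funext i j; simp [curlCoeff, partialDeriv_zero]⟩
  add_mem' := by
    rintro ξ₁ ξ₂ ⟨h₁, smooth₁, vanish₁, eq₁⟩ ⟨h₂, smooth₂, vanish₂, eq₂⟩
    refine ⟨h₁ + h₂, fun i => (smooth₁ i).add (smooth₂ i), ?_, ?_⟩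
    · filter_upwards [vanish₁, vanish₂] with t ht₁ ht₂ i
      simp [ht₁, ht₂]
    · filter_upwards [eq₁, eq₂] with t ht₁ ht₂
      rw [Pi.add_apply, ht₁, ht₂, curlCoeff_add smooth₁ smooth₂]
  smul_mem' := by
    rintro c ξ ⟨h, smooth, vanish, eq⟩
    refine ⟨fun i x => c * h i x, fun i => contDiff_const.mul (smooth i), ?_, ?_⟩
    · filter_upwards [vanish] with t ht i
      rw [ht, mul_zero]
    · filter_upwards [vanish, eq] with t ht_vanish ht
      rw [Pi.smul_apply, ht, curlCoeff_mul_of_eq_zero contDiff_const smooth ht_vanish]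

lemma mem_exactAlong_of_eventuallyEq {ζ : ℝ → Fin m → Fin m → ℝ} (h : ξ =ᶠ[𝓝 0] ζ)
    (hζ : ζ ∈ exactAlong γ) : ξ ∈ exactAlong γ := by
  obtain ⟨g, smooth, vanish, eq⟩ := hζ
  exact ⟨g, smooth, vanish, h.trans eq⟩

lemma curlCoeff_comp_mem_exactAlong (hh : ∀ i, ContDiff ℝ ∞ (h i))
    (vanish : ∀ᶠ t in 𝓝 0, ∀ i, h i (γ t) = 0) :
    (fun t => curlCoeff h (γ t)) ∈ exactAlong γ :=
  ⟨h, hh, vanish, .rfl⟩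

lemma comp_smul_mem_exactAlong {f : (Fin m → ℝ) → ℝ} (hf : ContDiff ℝ ∞ f)
    (hξ : ξ ∈ exactAlong γ) : (fun t => f (γ t) • ξ t) ∈ exactAlong γ := by
  obtain ⟨h, smooth, vanish, eq⟩ := hξ
  refine ⟨fun i x => f x * h i x, fun i => hf.mul (smooth i), ?_, ?_⟩
  · filter_upwards [vanish] with t ht i
    rw [ht, mul_zero]
  · filter_upwards [vanish, eq] with t ht_vanish ht
    rw [ht, curlCoeff_mul_of_eq_zero hf smooth ht_vanish]

lemma zeroAR2_of_mem_exactAlong {η : Form2 m} (hη : IsForm2 m η)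
    (mem : (fun t => form2Coeff η (γ t)) ∈ exactAlong γ) : ZeroAR2 m η γ := by
  obtain ⟨h, smooth, vanish, coeff_eq⟩ := mem
  refine ⟨_, form1OfCoeff h, hη.sub (isForm2_extD1_form1OfCoeff smooth),
    isForm1_form1OfCoeff smooth, ?_, ?_, .of_forall fun x u v => (sub_add_cancel _ _).symm⟩
  · filter_upwards [coeff_eq] with t ht u v
    rw [hη.apply_eq_sum, ht, extD1_form1OfCoeff smooth, sub_self]
  · filter_upwards [vanish] with t ht u
    simp [form1OfCoeff, ht]

lemma mem_exactAlong_of_zeroAR2 {η : Form2 m} (hγ : Tendsto γ (𝓝 0) (𝓝 0))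
    (zeroAR : ZeroAR2 m η γ) : (fun t => form2Coeff η (γ t)) ∈ exactAlong γ := by
  obtain ⟨α, β, -, hβ, α_vanish, β_vanish, η_eq⟩ := zeroAR
  have extension (i : Fin m) : ∃ H : (Fin m → ℝ) → ℝ, ContDiff ℝ ∞ H ∧
      (fun x => β x (Pi.single i 1)) =ᶠ[𝓝 0] H := by
    obtain ⟨U, hU, smooth⟩ := hβ.2 (Pi.single i 1)
    exact exists_contDiff_eventuallyEq hU smooth
  choose h smooth h_eq using extension
  have h_eq_near : ∀ᶠ x in 𝓝 0, ∀ i, (fun y => β y (Pi.single i 1)) =ᶠ[𝓝 x] h i :=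
    eventually_all.2 fun i => (h_eq i).eventuallyEq_nhds
  refine ⟨h, smooth, ?_, ?_⟩
  · filter_upwards [β_vanish, hγ.eventually h_eq_near] with t ht h_eq_t i
    rw [← (h_eq_t i).eq_of_nhds, ht]
  · filter_upwards [α_vanish, hγ.eventually η_eq, hγ.eventually h_eq_near] with t ht η_eq_t h_eq_t
    funext i j
    rw [form2Coeff, η_eq_t, ht, zero_add, curlCoeff, ← partialDeriv_congr i (h_eq_t j),
      ← partialDeriv_congr j (h_eq_t i)]
    rfl

end ExactAlongCurve

section Curve457

/-- The weights for which `t ↦ (t⁴, t⁵, t⁷)` is quasi-homogeneous. -/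
abbrev weight457 : Fin 3 → ℕ := ![4, 5, 7]

/-- The curve `t ↦ (t⁴, t⁵, t⁷)`. -/
abbrev curve457 : ℝ → Fin 3 → ℝ := monomialCurve weight457

lemma weight457_pos : ∀ i, 0 < weight457 i := by decide

lemma forall_of_weight457_dotProduct_eq {n : ℕ} (hn : n < 16) {p : (Fin 3 → ℕ) → Prop}
    (h : ∀ a b c : Fin 4, weight457 ⬝ᵥ ![(a : ℕ), b, c] = n → p ![(a : ℕ), b, c])
    (α : Fin 3 → ℕ) (hα : weight457 ⬝ᵥ α = n) : p α := by
  have weight_eq : 4 * α 0 + 5 * α 1 + 7 * α 2 = n := by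
    rw [← hα]
    simp [dotProduct, Fin.sum_univ_three]
  have eta : α = ![α 0, α 1, α 2] := by
    funext i
    fin_cases i <;> rfl
  rw [eta] at hα ⊢
  exact h ⟨α 0, by omega⟩ ⟨α 1, by omega⟩ ⟨α 2, by omega⟩ hα

lemma tendsto_curve457 : Tendsto curve457 (𝓝 0) (𝓝 0) := by
  refine tendsto_pi_nhds.2 fun i => ?_
  simpa [monomialCurve, (weight457_pos i).ne'] using
    (continuous_pow (M := ℝ) (weight457 i)).tendsto 0

/-- The skew-symmetric matrix with entries `v 0`, `v 1`, `v 2` in positions `(0, 1)`, `(0, 2)`,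
`(1, 2)`, i.e. the coefficients of `v₀ dx₁∧dx₂ + v₁ dx₁∧dx₃ + v₂ dx₂∧dx₃`. -/
def skew : (Fin 3 → ℝ) →ₗ[ℝ] Fin 3 → Fin 3 → ℝ where
  toFun v := ![![0, v 0, v 1], ![-v 0, 0, v 2], ![-v 1, -v 2, 0]]
  map_add' v w := by ext i j; fin_cases i <;> fin_cases j <;> simp [add_comm]
  map_smul' c v := by ext i j; fin_cases i <;> fin_cases j <;> simp

/-- The index pairs of the entries above the diagonal, in the order used by `skew`. -/
def pair : Fin 3 → Fin 3 × Fin 3 := ![(0, 1), (0, 2), (1, 2)]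

lemma skew_apply_pair (v : Fin 3 → ℝ) (k : Fin 3) : skew v (pair k).1 (pair k).2 = v k := by
  fin_cases k <;> rfl

/-- The `k`-th entry of `skew` belongs to a form of weight `12 - pairShift k`; these shifts align
the three entries so that a form is homogeneous when its coefficients have
degrees `pairShift k + d`. -/
def pairShift : Fin 3 → ℕ := ![3, 1, 0]

/-- The coefficients along the curve of a quasi-homogeneous 2-form of weight `d + 12`. -/
def homogeneousForm (d : ℕ) : (Fin 3 → ℝ) →ₗ[ℝ] ℝ → Fin 3 → Fin 3 → ℝ where
  toFun v t := skew fun k => v k * t ^ (pairShift k + d)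
  map_add' v w := by
    funext t
    simp only [Pi.add_apply, add_mul, ← map_add]
    rfl
  map_smul' c v := by
    funext t
    simp only [Pi.smul_apply, smul_eq_mul, mul_assoc, RingHom.id_apply, ← map_smul]
    rfl

/-- The leading coefficients of the quasi-homogeneous forms of weight `d + 12` that agree along
the curve with some `dβ`, where `β` vanishes on the curve. -/
def exactOfWeight (d : ℕ) : Submodule ℝ (Fin 3 → ℝ) :=
  (exactAlong curve457).comap (homogeneousForm d)

lemma mem_exactOfWeight_add {d : ℕ} {v : Fin 3 → ℝ} (i : Fin 3) (hv : v ∈ exactOfWeight d) :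
    v ∈ exactOfWeight (d + weight457 i) := by
  rw [exactOfWeight, Submodule.mem_comap]
  convert comp_smul_mem_exactAlong (f := fun x => x i) (contDiff_apply ℝ ℝ i) hv using 1
  funext t
  simp only [homogeneousForm, LinearMap.coe_mk, AddHom.coe_mk, ← map_smul, monomialCurve]
  congr 1
  funext k
  simp only [Pi.smul_apply, smul_eq_mul, ← add_assoc, pow_add _ _ (weight457 i)]
  ring

section Binomials

variable (α β : Fin 3 → ℕ)

lemma curlCoeff_binomial_mem_exactAlong (h : weight457 ⬝ᵥ α = weight457 ⬝ᵥ β) (j : Fin 3) :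
    (fun t => curlCoeff (Pi.single j (monomialFun α - monomialFun β)) (curve457 t)) ∈
      exactAlong curve457 := by
  refine curlCoeff_comp_mem_exactAlong (fun i => ?_) (.of_forall fun t i => ?_)
  · rcases eq_or_ne i j with rfl | hij
    · rw [Pi.single_eq_same]
      exact (contDiff_monomialFun α).sub (contDiff_monomialFun β)
    · rw [Pi.single_eq_of_ne hij]
      exact contDiff_const
  · rcases eq_or_ne i j with rfl | hij
    · rw [Pi.single_eq_same, Pi.sub_apply, monomialFun_monomialCurve, monomialFun_monomialCurve, h,
        sub_self]
    · rw [Pi.single_eq_of_ne hij, Pi.zero_apply]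

variable {α β} {d : ℕ}

lemma partialDeriv_binomial (hα : weight457 ⬝ᵥ α = d) (hβ : weight457 ⬝ᵥ β = d) (i : Fin 3)
    (t : ℝ) : partialDeriv i (monomialFun α - monomialFun β) (curve457 t) =
      ((α i : ℝ) - β i) * t ^ (d - weight457 i) := by
  rw [partialDeriv_sub i ((contDiff_monomialFun α (n := 1)).differentiable one_ne_zero _)
      ((contDiff_monomialFun β (n := 1)).differentiable one_ne_zero _),
    partialDeriv_monomialFun_monomialCurve, partialDeriv_monomialFun_monomialCurve, hα, hβ, sub_mul]

variable (hα : weight457 ⬝ᵥ α = d + 8) (hβ : weight457 ⬝ᵥ β = d + 8)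
include hα hβ

lemma binomial_dx_zero_mem_exactOfWeight :
    ![(β 1 : ℝ) - α 1, (β 2 : ℝ) - α 2, 0] ∈ exactOfWeight d := by
  rw [exactOfWeight, Submodule.mem_comap]
  convert curlCoeff_binomial_mem_exactAlong α β (hα.trans hβ.symm) 0 using 1
  funext t i j
  fin_cases i <;> fin_cases j <;>
    simp [homogeneousForm, skew, pairShift, curlCoeff, partialDeriv_zero,
      partialDeriv_binomial hα hβ, -mul_eq_mul_left_iff]
  all_goals ring

lemma binomial_dx_one_mem_exactOfWeight :
    ![(α 0 : ℝ) - β 0, 0, (β 2 : ℝ) - α 2] ∈ exactOfWeight (d + 1) := by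
  rw [exactOfWeight, Submodule.mem_comap]
  convert curlCoeff_binomial_mem_exactAlong α β (hα.trans hβ.symm) 1 using 1
  funext t i j
  fin_cases i <;> fin_cases j <;>
    simp [homogeneousForm, skew, pairShift, curlCoeff, partialDeriv_zero,
      partialDeriv_binomial hα hβ, -mul_eq_mul_left_iff]
  all_goals ring

lemma binomial_dx_two_mem_exactOfWeight :
    ![0, (α 0 : ℝ) - β 0, (α 1 : ℝ) - β 1] ∈ exactOfWeight (d + 3) := by
  rw [exactOfWeight, Submodule.mem_comap]
  convert curlCoeff_binomial_mem_exactAlong α β (hα.trans hβ.symm) 2 using 1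
  funext t i j
  fin_cases i <;> fin_cases j <;>
    simp [homogeneousForm, skew, pairShift, curlCoeff, partialDeriv_zero,
      partialDeriv_binomial hα hβ, -mul_eq_mul_left_iff]
  all_goals ring

end Binomials

section Generators

lemma eq_top_of_det_ne_zero {n K : Type*} [Fintype n] [DecidableEq n] [Field K]
    {E : Submodule K (n → K)} {A : Matrix n n K} (mem : ∀ i, A i ∈ E) (hA : A.det ≠ 0) : E = ⊤ := by
  have span_eq : Submodule.span K (Set.range A) = ⊤ :=
    (Matrix.linearIndependent_rows_of_det_ne_zero hA).span_eq_top_of_card_eq_finrank' (by simp)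
  exact eq_top_iff.2 (span_eq ▸ Submodule.span_le.2 (Set.range_subset_iff.2 mem))

lemma mem_exactOfWeight_four : ![1, 1, 0] ∈ exactOfWeight 4 := by
  simpa using binomial_dx_zero_mem_exactOfWeight (α := ![3, 0, 0]) (β := ![0, 1, 1]) (d := 4)
    (by decide) (by decide)

lemma mem_exactOfWeight_five : ![3, 0, 1] ∈ exactOfWeight 5 := by
  simpa using binomial_dx_one_mem_exactOfWeight (α := ![3, 0, 0]) (β := ![0, 1, 1]) (d := 4)
    (by decide) (by decide)

lemma mem_exactOfWeight_six : ![-2, 2, 0] ∈ exactOfWeight 6 := by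
  simpa using binomial_dx_zero_mem_exactOfWeight (α := ![1, 2, 0]) (β := ![0, 0, 2]) (d := 6)
    (by decide) (by decide)

lemma mem_exactOfWeight_eight : ![-2, 0, 1] ∈ exactOfWeight 8 := by
  simpa using binomial_dx_one_mem_exactOfWeight (α := ![0, 3, 0]) (β := ![2, 0, 1]) (d := 7)
    (by decide) (by decide)

lemma exactOfWeight_seven : exactOfWeight 7 = ⊤ := by
  have mem₁ : ![0, 3, -1] ∈ exactOfWeight 7 := by
    simpa using binomial_dx_two_mem_exactOfWeight (α := ![3, 0, 0]) (β := ![0, 1, 1]) (d := 4)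
      (by decide) (by decide)
  have mem₂ : ![1, 0, 2] ∈ exactOfWeight 7 := by
    simpa using binomial_dx_one_mem_exactOfWeight (α := ![1, 2, 0]) (β := ![0, 0, 2]) (d := 6)
      (by decide) (by decide)
  have mem₃ : ![-3, 1, 0] ∈ exactOfWeight 7 := by
    simpa using binomial_dx_zero_mem_exactOfWeight (α := ![0, 3, 0]) (β := ![2, 0, 1]) (d := 7)
      (by decide) (by decide)
  exact eq_top_of_det_ne_zero (A := !![0, 3, -1; 1, 0, 2; -3, 1, 0])
    (fun i => by fin_cases i <;> assumption) (by simp [Matrix.det_fin_three]; norm_num)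

lemma exactOfWeight_nine : exactOfWeight 9 = ⊤ := by
  have mem₁ : ![0, 1, 2] ∈ exactOfWeight 9 := by
    simpa using binomial_dx_two_mem_exactOfWeight (α := ![1, 2, 0]) (β := ![0, 0, 2]) (d := 6)
      (by decide) (by decide)
  have mem₂ : ![3, 0, 1] ∈ exactOfWeight 9 := mem_exactOfWeight_add 0 mem_exactOfWeight_five
  have mem₃ : ![1, 1, 0] ∈ exactOfWeight 9 := mem_exactOfWeight_add 1 mem_exactOfWeight_four
  exact eq_top_of_det_ne_zero (A := !![0, 1, 2; 3, 0, 1; 1, 1, 0])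
    (fun i => by fin_cases i <;> assumption) (by simp [Matrix.det_fin_three]; norm_num)

lemma exactOfWeight_ten : exactOfWeight 10 = ⊤ := by
  have mem₁ : ![0, -2, 3] ∈ exactOfWeight 10 := by
    simpa using binomial_dx_two_mem_exactOfWeight (α := ![0, 3, 0]) (β := ![2, 0, 1]) (d := 7)
      (by decide) (by decide)
  have mem₂ : ![-2, 2, 0] ∈ exactOfWeight 10 := mem_exactOfWeight_add 0 mem_exactOfWeight_six
  have mem₃ : ![3, 0, 1] ∈ exactOfWeight 10 := mem_exactOfWeight_add 1 mem_exactOfWeight_five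
  exact eq_top_of_det_ne_zero (A := !![0, -2, 3; -2, 2, 0; 3, 0, 1])
    (fun i => by fin_cases i <;> assumption) (by simp [Matrix.det_fin_three]; norm_num)

lemma exactOfWeight_eq_top {d : ℕ} (hd : 9 ≤ d) : exactOfWeight d = ⊤ := by
  have propagate {d : ℕ} (i : Fin 3) (h : exactOfWeight d = ⊤) :
      exactOfWeight (d + weight457 i) = ⊤ :=
    eq_top_iff.2 fun v _ => mem_exactOfWeight_add i (h ▸ Submodule.mem_top)
  induction d using Nat.strong_induction_on with
  | _ d ih =>
    obtain rfl | rfl | rfl | rfl | hd : d = 9 ∨ d = 10 ∨ d = 11 ∨ d = 12 ∨ 13 ≤ d := by omega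
    · exact exactOfWeight_nine
    · exact exactOfWeight_ten
    · exact propagate 0 exactOfWeight_seven
    · exact propagate 1 exactOfWeight_seven
    · obtain ⟨e, rfl⟩ := Nat.exists_eq_add_of_le' (show 4 ≤ d by omega)
      exact propagate 0 (ih e (by omega) (by omega))

end Generators

section Sufficiency

lemma skew_single_mem_exactAlong {k : Fin 3} {r : (Fin 3 → ℝ) → ℝ}
    (hr : r ∈ weightFiltration weight457 (pairShift k + 9)) :
    (fun t => skew (Pi.single k (r (curve457 t)))) ∈ exactAlong curve457 := by
  induction hr using Submodule.span_induction with
  | mem r hr =>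
    obtain ⟨α, f, hα, hf, rfl⟩ := hr
    obtain ⟨d, hd⟩ := Nat.exists_eq_add_of_le hα
    have mem : homogeneousForm (9 + d) (Pi.single k 1) ∈ exactAlong curve457 := by
      have : Pi.single k 1 ∈ exactOfWeight (9 + d) :=
        exactOfWeight_eq_top (d := 9 + d) (by omega) ▸ Submodule.mem_top
      exact this
    convert comp_smul_mem_exactAlong hf mem using 1
    funext t
    simp only [monomialFun_monomialCurve, hd, homogeneousForm, LinearMap.coe_mk, AddHom.coe_mk,
      ← map_smul]
    congr 1
    funext l
    rcases eq_or_ne l k with rfl | hl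
    · simp [add_assoc, mul_comm]
    · simp [hl]
  | zero =>
    simp only [Pi.zero_apply, Pi.single_zero, map_zero]
    exact Submodule.zero_mem _
  | add r s _ _ ihr ihs =>
    simp only [Pi.add_apply, Pi.single_add, map_add]
    exact Submodule.add_mem _ ihr ihs
  | smul c r _ ih =>
    simp only [Pi.smul_apply, Pi.single_smul, map_smul]
    exact Submodule.smul_mem _ c ih

variable {P : Fin 3 → (Fin 3 → ℝ) → ℝ}

lemma skew_comp_mem_exactAlong (hP : ∀ k, ContDiff ℝ ∞ (P k))
    (low : ∀ k, ∀ n < pairShift k, taylorCoeff n (fun t => P k (curve457 t)) = 0)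
    (mem : ∀ d < 9, (fun k => taylorCoeff (pairShift k + d) fun t => P k (curve457 t)) ∈
      exactOfWeight d) :
    (fun t => skew fun k => P k (curve457 t)) ∈ exactAlong curve457 := by
  choose r hr P_eq using fun k =>
    exists_taylor_comp_monomialCurve weight457_pos (hP k) (pairShift k + 9)
  have split : (fun t => skew fun k => P k (curve457 t)) =
      ∑ d ∈ Finset.range 9, homogeneousForm d
        (fun k => taylorCoeff (pairShift k + d) fun t => P k (curve457 t)) +
      ∑ k, fun t => skew (Pi.single k (r k (curve457 t))) := by
    funext t
    simp only [Pi.add_apply, Finset.sum_apply, homogeneousForm, LinearMap.coe_mk, AddHom.coe_mk,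
      ← map_sum, ← map_add]
    congr 1
    funext k
    have low_terms : ∑ n ∈ Finset.range (pairShift k),
        taylorCoeff n (fun t => P k (curve457 t)) * t ^ n = 0 :=
      Finset.sum_eq_zero fun n hn => by rw [low k n (Finset.mem_range.1 hn), zero_mul]
    rw [P_eq, Finset.sum_range_add, low_terms, zero_add]
    simp
  rw [split]
  exact Submodule.add_mem _
    (Submodule.sum_mem _ fun d hd => mem d (Finset.mem_range.1 hd))
    (Submodule.sum_mem _ fun k _ => skew_single_mem_exactAlong (hr k))

variable (hP : ∀ k, ContDiff ℝ ∞ (P k))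
include hP

lemma taylorCoeff_gap (k : Fin 3) {n : ℕ} (hn : n ∈ ({1, 2, 3, 6} : Finset ℕ)) :
    taylorCoeff n (fun t => P k (curve457 t)) = 0 := by
  refine taylorCoeff_comp_monomialCurve_of_forall_ne weight457_pos ?_ (hP k)
  fin_cases hn <;> exact forall_of_weight457_dotProduct_eq (by decide) (by decide)

variable (closed : ∀ᶠ t in 𝓝 0, partialDeriv 0 (P 2) (curve457 t) -
  partialDeriv 1 (P 1) (curve457 t) + partialDeriv 2 (P 0) (curve457 t) = 0)
include closed

lemma taylorCoeff_partialDeriv_of_closed (n : ℕ) :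
    taylorCoeff n (fun t => partialDeriv 0 (P 2) (curve457 t)) -
      taylorCoeff n (fun t => partialDeriv 1 (P 1) (curve457 t)) +
      taylorCoeff n (fun t => partialDeriv 2 (P 0) (curve457 t)) = 0 := by
  have smooth (i k : Fin 3) := contDiffAt_comp_monomialCurve (w := weight457)
    (contDiff_partialDeriv i (hP k)) n
  rw [← taylorCoeff_sub (smooth 0 2) (smooth 1 1),
    ← taylorCoeff_add ((smooth 0 2).sub (smooth 1 1)) (smooth 2 0), taylorCoeff_congr closed,
    taylorCoeff_const, ite_self]

lemma taylorCoeff_of_closed_weight_sixteen :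
    taylorCoeff 4 (fun t => P 2 (curve457 t)) - taylorCoeff 5 (fun t => P 1 (curve457 t)) +
      taylorCoeff 7 (fun t => P 0 (curve457 t)) = 0 := by
  have := taylorCoeff_partialDeriv_of_closed hP closed 0
  rw [taylorCoeff_partialDeriv_comp_monomialCurve weight457_pos (a := 1) _ (hP 2),
    taylorCoeff_partialDeriv_comp_monomialCurve weight457_pos (a := 1) _ (hP 1),
    taylorCoeff_partialDeriv_comp_monomialCurve weight457_pos (a := 1) _ (hP 0)] at this
  · simpa using this
  all_goals exact forall_of_weight457_dotProduct_eq (by decide) (by decide)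

lemma taylorCoeff_of_closed_weight_twenty :
    2 * taylorCoeff 8 (fun t => P 2 (curve457 t)) - taylorCoeff 9 (fun t => P 1 (curve457 t)) +
      taylorCoeff 11 (fun t => P 0 (curve457 t)) = 0 := by
  have := taylorCoeff_partialDeriv_of_closed hP closed 4
  rw [taylorCoeff_partialDeriv_comp_monomialCurve weight457_pos (a := 2) _ (hP 2),
    taylorCoeff_partialDeriv_comp_monomialCurve weight457_pos (a := 1) _ (hP 1),
    taylorCoeff_partialDeriv_comp_monomialCurve weight457_pos (a := 1) _ (hP 0)] at this
  · simpa using this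
  all_goals exact forall_of_weight457_dotProduct_eq (by decide) (by decide)

end Sufficiency

section Invariants

/-- The coordinates, with respect to the nine basis forms, of the algebraic restriction of a
closed form whose `k`-th coefficient along the curve is `∑ₙ c k n * tⁿ`. -/
def invariants : (Fin 3 → ℕ → ℝ) →ₗ[ℝ] Fin 9 → ℝ where
  toFun c :=
    ![c 0 0, c 1 0, c 2 0, c 0 4, c 0 5, c 1 4, c 2 4, c 2 5 - c 0 8 / 3, c 1 7 + c 0 9]
  map_add' b c := by
    simp only [Pi.add_apply, add_div, add_sub_add_comm, add_add_add_comm, Matrix.add_cons,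
      Matrix.head_cons, Matrix.tail_cons, Matrix.empty_add_empty]
  map_smul' a c := by
    simp only [Pi.smul_apply, smul_eq_mul, mul_div_assoc, ← mul_sub, ← mul_add, Matrix.smul_cons,
      Matrix.smul_empty, RingHom.id_apply]

lemma mem_exactOfWeight_of_invariants_eq_zero {c : Fin 3 → ℕ → ℝ}
    (gap : ∀ k, ∀ n ∈ ({1, 2, 3, 6} : Finset ℕ), c k n = 0)
    (closed₁ : c 2 4 - c 1 5 + c 0 7 = 0) (closed₂ : 2 * c 2 8 - c 1 9 + c 0 11 = 0)
    (inv : invariants c = 0) {d : ℕ} (hd : d < 9) :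
    (fun k => c k (pairShift k + d)) ∈ exactOfWeight d := by
  obtain ⟨-, -, c20, c04, c05, c14, c24, c25, c17⟩ : c 0 0 = 0 ∧ c 1 0 = 0 ∧ c 2 0 = 0 ∧
      c 0 4 = 0 ∧ c 0 5 = 0 ∧ c 1 4 = 0 ∧ c 2 4 = 0 ∧ c 2 5 - c 0 8 / 3 = 0 ∧
      c 1 7 + c 0 9 = 0 := by
    simpa [invariants, Fin.forall_fin_succ] using congr_fun inv
  simp only [Finset.forall_mem_insert, Finset.mem_singleton, forall_eq] at gap
  have of_eq {v : Fin 3 → ℝ} (mem : v ∈ exactOfWeight d)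
      (h : ∀ k, c k (pairShift k + d) = v k) : (fun k => c k (pairShift k + d)) ∈ exactOfWeight d :=
    (funext h : (fun k => c k (pairShift k + d)) = v) ▸ mem
  obtain hd | rfl | rfl | rfl | rfl | rfl : d < 4 ∨ d = 4 ∨ d = 5 ∨ d = 6 ∨ d = 7 ∨ d = 8 := by
    omega
  · refine of_eq (Submodule.zero_mem _) fun k => ?_
    interval_cases d <;> fin_cases k <;> simp [pairShift, gap, c04, c05, c14, c20]
  · refine of_eq (Submodule.smul_mem _ (c 0 7) mem_exactOfWeight_four) fun k => ?_
    fin_cases k <;> simp [pairShift]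
    all_goals linarith
  · refine of_eq (Submodule.smul_mem _ (c 2 5) mem_exactOfWeight_five) fun k => ?_
    fin_cases k <;> simp [pairShift, gap]
    linarith
  · refine of_eq (Submodule.smul_mem _ (-(c 0 9) / 2) mem_exactOfWeight_six) fun k => ?_
    fin_cases k <;> simp [pairShift, gap]
    linarith
  · exact exactOfWeight_seven ▸ Submodule.mem_top
  · refine of_eq (add_mem
      (Submodule.smul_mem _ (c 1 9) (mem_exactOfWeight_add 0 mem_exactOfWeight_four))
      (Submodule.smul_mem _ (c 2 8) mem_exactOfWeight_eight)) fun k => ?_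
    fin_cases k <;> simp [pairShift]
    all_goals linarith

/-- The Taylor coefficients of the entries above the diagonal of a matrix-valued function. -/
def jets (ξ : ℝ → Fin 3 → Fin 3 → ℝ) (k : Fin 3) (n : ℕ) : ℝ :=
  taylorCoeff n fun t => ξ t (pair k).1 (pair k).2

variable {η : Form2 3}

lemma jets_congr {ξ ζ : ℝ → Fin 3 → Fin 3 → ℝ} (h : ξ =ᶠ[𝓝 0] ζ) : jets ξ = jets ζ := by
  funext k n
  refine taylorCoeff_congr ?_
  filter_upwards [h] with t ht
  rw [ht]

lemma jets_skew (φ : ℝ → Fin 3 → ℝ) :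
    jets (fun t => skew (φ t)) = fun k n => taylorCoeff n fun t => φ t k := by
  funext k n
  simp only [jets, skew_apply_pair]

lemma IsForm2.form2Coeff_eq_skew (hη : IsForm2 3 η) (x : Fin 3 → ℝ) :
    form2Coeff η x = skew fun k => form2Coeff η x (pair k).1 (pair k).2 := by
  have antisymm (i j : Fin 3) : form2Coeff η x i j = -form2Coeff η x j i := hη.2.1 x _ _
  funext i j
  fin_cases i <;> fin_cases j <;> simp [skew, pair] <;> linarith [antisymm 0 0, antisymm 1 1,
    antisymm 2 2, antisymm 0 1, antisymm 0 2, antisymm 1 2]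

lemma exists_contDiff_form2Coeff_eq_skew (hη : IsForm2 3 η) :
    ∃ P : Fin 3 → (Fin 3 → ℝ) → ℝ, (∀ k, ContDiff ℝ ∞ (P k)) ∧
      form2Coeff η =ᶠ[𝓝 0] fun x => skew fun k => P k x := by
  have extension (k : Fin 3) : ∃ P : (Fin 3 → ℝ) → ℝ, ContDiff ℝ ∞ P ∧
      (fun x => form2Coeff η x (pair k).1 (pair k).2) =ᶠ[𝓝 0] P := by
    obtain ⟨U, hU, smooth⟩ := hη.2.2 (Pi.single (pair k).1 1) (Pi.single (pair k).2 1)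
    exact exists_contDiff_eventuallyEq hU smooth
  choose P smooth eq using extension
  refine ⟨P, smooth, ?_⟩
  filter_upwards [eventually_all.2 eq] with x hx
  rw [hη.form2Coeff_eq_skew]
  simp only [hx]

lemma Closed2.eventually_partialDeriv_eq_zero (closed : Closed2 3 η)
    {P : Fin 3 → (Fin 3 → ℝ) → ℝ} (eq : form2Coeff η =ᶠ[𝓝 0] fun x => skew fun k => P k x) :
    ∀ᶠ x in 𝓝 0, partialDeriv 0 (P 2) x - partialDeriv 1 (P 1) x + partialDeriv 2 (P 0) x = 0 := by
  filter_upwards [closed, eq.eventuallyEq_nhds] with x hx eq_near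
  have congr (i k : Fin 3) : partialDeriv i (P k) x =
      partialDeriv i (fun y => form2Coeff η y (pair k).1 (pair k).2) x := by
    refine (partialDeriv_congr i ?_).symm
    filter_upwards [eq_near] with y hy
    rw [hy, skew_apply_pair]
  rw [congr, congr, congr]
  exact hx (Pi.single 0 1) (Pi.single 1 1) (Pi.single 2 1)

lemma zeroAR2_of_invariants_eq_zero (hη : IsForm2 3 η) (closed : Closed2 3 η)
    (inv : invariants (jets fun t => form2Coeff η (curve457 t)) = 0) : ZeroAR2 3 η curve457 := by
  obtain ⟨P, smooth, eq⟩ := exists_contDiff_form2Coeff_eq_skew hη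
  have closed_P := tendsto_curve457.eventually (closed.eventually_partialDeriv_eq_zero eq)
  have eq_along := tendsto_curve457.eventually eq
  rw [jets_congr eq_along, jets_skew] at inv
  refine zeroAR2_of_mem_exactAlong hη (mem_exactAlong_of_eventuallyEq eq_along ?_)
  refine skew_comp_mem_exactAlong smooth (fun k n hn => ?_) fun d hd =>
    mem_exactOfWeight_of_invariants_eq_zero (fun k n => taylorCoeff_gap smooth k)
      (taylorCoeff_of_closed_weight_sixteen smooth closed_P)
      (taylorCoeff_of_closed_weight_twenty smooth closed_P) inv hd
  have n_lt : n < 3 := hn.trans_le (by fin_cases k <;> decide)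
  rcases n.eq_zero_or_pos with rfl | pos
  · have := congr_fun inv
    fin_cases k
    · exact this 0
    · exact this 1
    · simp [pairShift] at hn
  · refine taylorCoeff_gap smooth k ?_
    simp only [Finset.mem_insert, Finset.mem_singleton]
    omega

end Invariants

section Necessity

variable {H : (Fin 3 → ℝ) → ℝ}

lemma taylorCoeff_partialDeriv_of_vanish (hH : ContDiff ℝ ∞ H)
    (vanish : ∀ᶠ t in 𝓝 0, H (curve457 t) = 0) :
    ∀ p ∈ ({(0, 0), (0, 4), (0, 5), (0, 7), (0, 9), (1, 0), (1, 4), (1, 5), (1, 8), (2, 0),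
      (2, 4)} : Finset (Fin 3 × ℕ)),
      taylorCoeff p.2 (fun t => partialDeriv p.1 H (curve457 t)) = 0 := by
  intro p hp
  have exponent_unique : p.2 + weight457 p.1 < 16 ∧ ∃ e : Fin 4, ∀ a b c : Fin 4,
      weight457 ⬝ᵥ ![(a : ℕ), b, c] = p.2 + weight457 p.1 → ![(a : ℕ), b, c] p.1 = e := by
    revert p
    decide
  obtain ⟨hn, e, he⟩ := exponent_unique
  rw [taylorCoeff_partialDeriv_comp_monomialCurve weight457_pos
      (forall_of_weight457_dotProduct_eq hn he) hH, taylorCoeff_congr vanish,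
    taylorCoeff_const, ite_self, mul_zero]

lemma sum_taylorCoeff_partialDeriv_of_vanish (hH : ContDiff ℝ ∞ H)
    (vanish : ∀ᶠ t in 𝓝 0, H (curve457 t) = 0) {n : ℕ} {c : Fin 3 → ℕ} {a : ℕ}
    (h : ∀ α, weight457 ⬝ᵥ α = n → c ⬝ᵥ α = a) :
    ∑ i, c i * taylorCoeff n (fun t => t ^ weight457 i * partialDeriv i H (curve457 t)) = 0 := by
  rw [sum_taylorCoeff_partialDeriv_comp_monomialCurve (c := fun i => c i) (a := a) weight457_pos
    (fun α hα => by rw [← h α hα]; simp [dotProduct]) hH,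
    taylorCoeff_congr vanish, taylorCoeff_const, ite_self, mul_zero]

lemma taylorCoeff_partialDeriv_of_vanish_weight_twelve (hH : ContDiff ℝ ∞ H)
    (vanish : ∀ᶠ t in 𝓝 0, H (curve457 t) = 0) :
    taylorCoeff 8 (fun t => partialDeriv 0 H (curve457 t)) +
      3 * taylorCoeff 5 (fun t => partialDeriv 2 H (curve457 t)) = 0 := by
  have := sum_taylorCoeff_partialDeriv_of_vanish hH vanish (n := 12) (c := ![1, 0, 3]) (a := 3)
    (forall_of_weight457_dotProduct_eq (by decide) (by decide))
  have smooth (i : Fin 3) := contDiffAt_comp_monomialCurve (w := weight457)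
    (contDiff_partialDeriv i hH) 12
  simpa [Fin.sum_univ_three, taylorCoeff_pow_mul _ (smooth _)] using this

lemma taylorCoeff_partialDeriv_of_vanish_weight_fourteen (hH : ContDiff ℝ ∞ H)
    (vanish : ∀ᶠ t in 𝓝 0, H (curve457 t) = 0) :
    taylorCoeff 9 (fun t => partialDeriv 1 H (curve457 t)) +
      taylorCoeff 7 (fun t => partialDeriv 2 H (curve457 t)) = 0 := by
  have := sum_taylorCoeff_partialDeriv_of_vanish hH vanish (n := 14) (c := ![0, 1, 1]) (a := 2)
    (forall_of_weight457_dotProduct_eq (by decide) (by decide))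
  have smooth (i : Fin 3) := contDiffAt_comp_monomialCurve (w := weight457)
    (contDiff_partialDeriv i hH) 14
  simpa [Fin.sum_univ_three, taylorCoeff_pow_mul _ (smooth _)] using this

lemma jets_curlCoeff {h : Fin 3 → (Fin 3 → ℝ) → ℝ} (smooth : ∀ i, ContDiff ℝ ∞ (h i)) (k : Fin 3)
    (n : ℕ) : jets (fun t => curlCoeff h (curve457 t)) k n =
      taylorCoeff n (fun t => partialDeriv (pair k).1 (h (pair k).2) (curve457 t)) -
        taylorCoeff n (fun t => partialDeriv (pair k).2 (h (pair k).1) (curve457 t)) :=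
  taylorCoeff_sub (contDiffAt_comp_monomialCurve (contDiff_partialDeriv _ (smooth _)) n)
    (contDiffAt_comp_monomialCurve (contDiff_partialDeriv _ (smooth _)) n)

lemma invariants_jets_eq_zero_of_mem_exactAlong {ξ : ℝ → Fin 3 → Fin 3 → ℝ}
    (mem : ξ ∈ exactAlong curve457) : invariants (jets ξ) = 0 := by
  obtain ⟨h, smooth, vanish, eq⟩ := mem
  rw [jets_congr eq]
  have vanish (i : Fin 3) : ∀ᶠ t in 𝓝 0, h i (curve457 t) = 0 := vanish.mono fun t ht => ht i
  have weight_twelve :=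
    taylorCoeff_partialDeriv_of_vanish_weight_twelve (smooth 1) (vanish 1)
  have weight_fourteen :=
    taylorCoeff_partialDeriv_of_vanish_weight_fourteen (smooth 0) (vanish 0)
  have isolated (i : Fin 3) := taylorCoeff_partialDeriv_of_vanish (smooth i) (vanish i)
  simp only [Finset.forall_mem_insert, Finset.mem_singleton, forall_eq] at isolated
  have jets₈ : jets (fun t => curlCoeff h (curve457 t)) 2 5 -
      jets (fun t => curlCoeff h (curve457 t)) 0 8 / 3 = 0 := by
    simp only [jets_curlCoeff smooth, pair, Matrix.cons_val, isolated]
    linarith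
  have jets₉ : jets (fun t => curlCoeff h (curve457 t)) 1 7 +
      jets (fun t => curlCoeff h (curve457 t)) 0 9 = 0 := by
    simp only [jets_curlCoeff smooth, pair, Matrix.cons_val, isolated]
    linarith
  funext k
  fin_cases k
  on_goal 8 => exact jets₈
  on_goal 8 => exact jets₉
  all_goals simp [invariants, jets_curlCoeff smooth, pair, isolated]

end Necessity

section Coordinates

lemma IsForm2.contDiffAt_form2Coeff_comp {m : ℕ} {η : Form2 m} (hη : IsForm2 m η)
    {γ : ℝ → Fin m → ℝ} (hγ : ContDiff ℝ ∞ γ) (hγ₀ : γ 0 = 0) (i j : Fin m) (n : ℕ) :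
    ContDiffAt ℝ n (fun t => form2Coeff η (γ t) i j) 0 := by
  obtain ⟨U, hU, smooth⟩ := hη.2.2 (Pi.single i 1) (Pi.single j 1)
  have smooth_at : ContDiffAt ℝ ∞ (fun x => form2Coeff η x i j) (γ 0) :=
    smooth.contDiffAt (hγ₀ ▸ hU)
  exact (smooth_at.comp 0 hγ.contDiffAt).of_le (mod_cast le_top)

lemma curve457_zero : curve457 0 = 0 := by
  funext i
  simp [monomialCurve, (weight457_pos i).ne']

/-- The nine coordinates of the algebraic restriction of a closed form to the curve
`(t⁴, t⁵, t⁷)`. -/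
def coordinates : closedForms 3 →ₗ[ℝ] Fin 9 → ℝ where
  toFun η := invariants (jets fun t => form2Coeff η.1 (curve457 t))
  map_add' η θ := by
    have smooth (η : closedForms 3) (k : Fin 3) (n : ℕ) :=
      η.2.1.contDiffAt_form2Coeff_comp (γ := curve457) contDiff_monomialCurve
        curve457_zero (pair k).1 (pair k).2 n
    rw [← map_add]
    congr 1
    funext k n
    exact taylorCoeff_add (smooth η k n) (smooth θ k n)
  map_smul' c η := by
    rw [RingHom.id_apply, ← map_smul]
    congr 1
    funext k n
    exact taylorCoeff_const_mul c _

lemma zeroAR2_iff_coordinates_eq_zero (η : closedForms 3) :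
    ZeroAR2 3 η.1 curve457 ↔ coordinates η = 0 :=
  ⟨fun zeroAR => invariants_jets_eq_zero_of_mem_exactAlong
    (mem_exactAlong_of_zeroAR2 tendsto_curve457 zeroAR),
    zeroAR2_of_invariants_eq_zero η.2.1 η.2.2⟩

lemma isForm2_wedge (m : ℕ) (i j : Fin m) : IsForm2 m (wedge m i j) := by
  refine ⟨fun x u₁ u₂ v c => ?_, fun x u v => ?_, fun u v =>
    ⟨Set.univ, univ_mem, contDiffOn_const⟩⟩
  · simp only [wedge, Pi.add_apply, Pi.smul_apply, smul_eq_mul]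
    ring
  · simp only [wedge]
    ring

lemma closed2_wedge (m : ℕ) (i j : Fin m) : Closed2 m (wedge m i j) :=
  .of_forall fun x u v w => by simp [extD2, wedge]

lemma isForm2_mwedge (m : ℕ) (l i j : Fin m) : IsForm2 m (mwedge m l i j) := by
  refine ⟨fun x u₁ u₂ v c => ?_, fun x u v => ?_, fun u v =>
    ⟨Set.univ, univ_mem, ((contDiff_apply ℝ ℝ l).mul contDiff_const).contDiffOn⟩⟩
  · simp only [mwedge, Pi.add_apply, Pi.smul_apply, smul_eq_mul]
    ring
  · simp only [mwedge]
    ring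

lemma extD2_mwedge (m : ℕ) (l i j : Fin m) (x u v w : Fin m → ℝ) :
    extD2 m (mwedge m l i j) x u v w = u l * (v i * w j - v j * w i) -
      v l * (u i * w j - u j * w i) + w l * (u i * v j - u j * v i) := by
  have fderiv_eq (u : Fin m → ℝ) (a : ℝ) :
      fderiv ℝ (fun y : Fin m → ℝ => y l * a) x u = u l * a := by
    rw [fderiv_mul_const (by fun_prop), (hasFDerivAt_apply l x).fderiv]
    simp [mul_comm]
  simp only [extD2, mwedge, fderiv_eq]

lemma basis457_mem_closedForms (k : Fin 9) : basis457 k ∈ closedForms 3 := by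
  have wedge_mem (i j : Fin 3) : wedge 3 i j ∈ closedForms 3 :=
    ⟨isForm2_wedge 3 i j, closed2_wedge 3 i j⟩
  have mwedge_left_mem (i j : Fin 3) : mwedge 3 i i j ∈ closedForms 3 :=
    ⟨isForm2_mwedge 3 i i j, .of_forall fun x u v w => by rw [extD2_mwedge]; ring⟩
  have mwedge_right_mem (i j : Fin 3) : mwedge 3 j i j ∈ closedForms 3 :=
    ⟨isForm2_mwedge 3 j i j, .of_forall fun x u v w => by rw [extD2_mwedge]; ring⟩
  have sum_mem : (fun x u v => mwedge 3 1 0 2 x u v + mwedge 3 0 1 2 x u v) ∈ closedForms 3 := by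
    have smooth := isForm2_mwedge 3
    refine ⟨(smooth 1 0 2).add (smooth 0 1 2), ?_⟩
    filter_upwards [(smooth 1 0 2).extD2_add (smooth 0 1 2)] with x hx u v w
    rw [hx, extD2_mwedge, extD2_mwedge]
    ring
  fin_cases k
  exacts [wedge_mem 0 1, wedge_mem 0 2, wedge_mem 1 2, mwedge_left_mem 0 1, mwedge_right_mem 0 1,
    mwedge_left_mem 0 2, sum_mem, mwedge_left_mem 1 2, mwedge_right_mem 0 2]

lemma form2Coeff_wedge_pair (k l : Fin 3) (x : Fin 3 → ℝ) :
    form2Coeff (wedge 3 (pair l).1 (pair l).2) x (pair k).1 (pair k).2 =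
      if k = l then 1 else 0 := by
  fin_cases k <;> fin_cases l <;> simp [form2Coeff, wedge, pair]

lemma jets_wedge (l : Fin 3) (γ : ℝ → Fin 3 → ℝ) :
    jets (fun t => form2Coeff (wedge 3 (pair l).1 (pair l).2) (γ t)) =
      Pi.single l (Pi.single 0 1) := by
  funext k n
  simp only [jets, form2Coeff_wedge_pair, taylorCoeff_const]
  rcases eq_or_ne k l with rfl | hkl
  · simp [Pi.single_apply]
  · simp [hkl]

lemma jets_mwedge (j l : Fin 3) :
    jets (fun t => form2Coeff (mwedge 3 j (pair l).1 (pair l).2) (curve457 t)) =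
      Pi.single l (Pi.single (weight457 j) 1) := by
  funext k n
  have coeff_eq (t : ℝ) : form2Coeff (mwedge 3 j (pair l).1 (pair l).2) (curve457 t) (pair k).1
      (pair k).2 = (if k = l then 1 else 0) * t ^ weight457 j := by
    rw [← form2Coeff_wedge_pair k l (curve457 t), mul_comm]
    rfl
  simp only [jets, coeff_eq, taylorCoeff_const_mul, taylorCoeff_pow]
  rcases eq_or_ne k l with rfl | hkl
  · simp [Pi.single_apply]
  · simp [hkl]

lemma jets_basis457_six : jets (fun t => form2Coeff (basis457 6) (curve457 t)) =
    Pi.single 1 (Pi.single 5 1) + Pi.single 2 (Pi.single 4 1) := by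
  refine Eq.trans ?_ (congr_arg₂ (· + ·) (jets_mwedge 1 1) (jets_mwedge 0 2))
  have smooth (j i₁ i₂ : Fin 3) := (isForm2_mwedge 3 j i₁ i₂).contDiffAt_form2Coeff_comp
    (contDiff_monomialCurve (w := weight457)) curve457_zero
  funext k n
  exact taylorCoeff_add (smooth 1 0 2 _ _ n) (smooth 0 1 2 _ _ n)

lemma coordinates_basis457 (k : Fin 9) :
    coordinates ⟨basis457 k, basis457_mem_closedForms k⟩ = Pi.single k 1 := by
  change invariants (jets fun t => form2Coeff (basis457 k) (curve457 t)) = Pi.single k 1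
  have jets_eq : jets (fun t => form2Coeff (basis457 k) (curve457 t)) =
      (![Pi.single 0 (Pi.single 0 1), Pi.single 1 (Pi.single 0 1), Pi.single 2 (Pi.single 0 1),
        Pi.single 0 (Pi.single 4 1), Pi.single 0 (Pi.single 5 1), Pi.single 1 (Pi.single 4 1),
        Pi.single 1 (Pi.single 5 1) + Pi.single 2 (Pi.single 4 1), Pi.single 2 (Pi.single 5 1),
        Pi.single 1 (Pi.single 7 1)] : Fin 9 → Fin 3 → ℕ → ℝ) k := by
    fin_cases k
    exacts [jets_wedge 0 _, jets_wedge 1 _, jets_wedge 2 _, jets_mwedge 0 0, jets_mwedge 1 0,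
      jets_mwedge 0 1, jets_basis457_six, jets_mwedge 1 2, jets_mwedge 2 1]
  rw [jets_eq]
  funext l
  fin_cases k <;> fin_cases l <;> simp [invariants]

lemma zeroAR2_sub_sum_basis457_iff (η : closedForms 3) (c : Fin 9 → ℝ) :
    ZeroAR2 3 (fun x u v => η.1 x u v - ∑ k, c k * basis457 k x u v) curve457 ↔
      c = coordinates η := by
  let b (k : Fin 9) : closedForms 3 := ⟨basis457 k, basis457_mem_closedForms k⟩
  have difference_eq : (fun x u v => η.1 x u v - ∑ k, c k * basis457 k x u v) =
      (η - ∑ k, c k • b k).1 := by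
    funext x u v
    have apply_eq (k : Fin 9) : c k * basis457 k x u v = (c k • (b k).1) x u v := rfl
    simp only [apply_eq, Submodule.coe_sub, Submodule.coe_sum, Submodule.coe_smul, Pi.sub_apply,
      Finset.sum_apply]
  have coordinates_sum : coordinates (∑ k, c k • b k) = c := by
    simp only [map_sum, map_smul, b, coordinates_basis457]
    exact (pi_eq_sum_univ' c).symm
  rw [difference_eq, zeroAR2_iff_coordinates_eq_zero, map_sub, coordinates_sum, sub_eq_zero,
    eq_comm]

end Coordinates

end Curve457

end AlgebraicRestrictions

/-- The algebraic restrictions to `g(t) = (t⁴,t⁵,t⁷)` of the nine closed 2-forms above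
form a basis of the space of algebraic restrictions of closed 2-forms. -/
theorem algRestriction_basis_457
    (ω : Form2 3) (hω : IsForm2 3 ω) (hcl : Closed2 3 ω) :
    ∃! c : Fin 9 → ℝ,
      ZeroAR2 3 (fun x u v => ω x u v - ∑ k, c k * basis457 k x u v)
        (fun t => ![t^4, t^5, t^7]) := by
  have curve_eq : (fun t : ℝ => ![t ^ 4, t ^ 5, t ^ 7]) = curve457 := by
    funext t i
    fin_cases i <;> rfl
  have zeroAR_iff := zeroAR2_sub_sum_basis457_iff ⟨ω, hω, hcl⟩
  rw [curve_eq]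
  exact ⟨_, (zeroAR_iff _).2 rfl, fun c hc => (zeroAR_iff c).1 hc⟩
end
end
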